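/- arXiv:1005.5090 — 2 statements merged into one kernel-verified Lean document; each statement's English description precedes it below -/
import Mathlib

section
/- Let n ≥ 3 and let K ⊆ ℝⁿ be a closed convex set with nonempty interior, K ≠ ℝⁿ, containing no affine line. Let δ : S^{n−1} → ℝ be continuous, H(u) = {x ∈ ℝⁿ : ⟨x, u⟩ = δ(u)}, and assume that for every u ∈ S^{n−1} the set frontier K ∩ H(u) is an (n−1)-dimensional convex quadric in H(u). If K is not strictly convex or K is not regular, then frontier K is a sheet of an elliptic cone, i.e., there exist an affine isometry f of ℝⁿ and scalars a₂, …, aₙ > 0 such that f(frontier K) = {x ∈ ℝⁿ : x₁ = √(a₂x₂² + ⋯ + aₙxₙ²)}. -/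
open Set Metric RealInnerProductSpace

noncomputable section

/-- Euclidean n-space. -/
abbrev En (n : ℕ) := EuclideanSpace ℝ (Fin n)

/-- A quadric surface in ℝⁿ: the zero set of a quadratic polynomial whose quadratic
part (given by a symmetric matrix) is not identically zero. -/
def IsQuadricSurface {n : ℕ} (Q : Set (En n)) : Prop :=
  ∃ (a : Matrix (Fin n) (Fin n) ℝ) (b : Fin n → ℝ) (c : ℝ),
    a.IsSymm ∧ a ≠ 0 ∧
    Q = {x : En n | (∑ i, ∑ k, a i k * x i * x k) + 2 * (∑ i, b i * x i) + c = 0}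

/-- A real quadric surface: a nonempty quadric surface. -/
def IsRealQuadricSurface {n : ℕ} (Q : Set (En n)) : Prop :=
  IsQuadricSurface Q ∧ Q.Nonempty

/-- The set of connected components of a subset `F` of a topological space. -/
def componentsIn {α : Type*} [TopologicalSpace α] (F : Set α) : Set (Set α) :=
  {C | ∃ x ∈ F, C = connectedComponentIn F x}

/-- A convex quadric: the frontier of a convex connected component of the complement
of a real quadric surface. -/
def IsConvexQuadric {n : ℕ} (S : Set (En n)) : Prop :=
  ∃ Q U : Set (En n), IsRealQuadricSurface Q ∧ U ∈ componentsIn Qᶜ ∧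
    Convex ℝ U ∧ S = frontier U
/-- `S` is an (n−1)-dimensional convex quadric in the hyperplane `H ⊆ ℝⁿ`:
for some affine isometry φ : ℝ^{n−1} → ℝⁿ with image `H`, the set φ⁻¹(S) is a
convex quadric in ℝ^{n−1}. -/
def IsConvexQuadricIn {n : ℕ} (H S : Set (En n)) : Prop :=
  S ⊆ H ∧ ∃ φ : En (n - 1) →ᵃⁱ[ℝ] En n,
    Set.range (φ : En (n - 1) → En n) = H ∧ IsConvexQuadric ((φ : En (n - 1) → En n) ⁻¹' S)

/-- The hyperplane H(u) = {x : ⟨x, u⟩ = δ(u)} associated to a unit vector u. -/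
def sphHyp {n : ℕ} (δ : sphere (0 : En n) 1 → ℝ) (u : sphere (0 : En n) 1) : Set (En n) :=
  {x : En n | ⟪x, (u : En n)⟫ = δ u}
/-- `K` contains no affine line. -/
def LineFree {n : ℕ} (K : Set (En n)) : Prop :=
  ¬ ∃ (p v : En n), v ≠ 0 ∧ ∀ t : ℝ, p + t • v ∈ K
/-- `G` is a supporting hyperplane of `K` at the point `x`. -/
def IsSupportHyperplaneAt {n : ℕ} (K : Set (En n)) (x : En n) (G : Set (En n)) : Prop :=
  (∃ (v : En n) (c : ℝ), v ≠ 0 ∧ G = {y : En n | ⟪y, v⟫ = c}) ∧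
    x ∈ G ∧ (G ∩ K).Nonempty ∧ G ∩ interior K = ∅

/-- `K` is strictly convex: its frontier contains no segment with distinct endpoints. -/
def IsStrictlyConvexSet {n : ℕ} (K : Set (En n)) : Prop :=
  ∀ x ∈ frontier K, ∀ y ∈ frontier K, x ≠ y → ¬ segment ℝ x y ⊆ frontier K

/-- `K` is regular: every frontier point lies on exactly one supporting hyperplane. -/
def IsRegularSet {n : ℕ} (K : Set (En n)) : Prop :=
  ∀ x ∈ frontier K, ∃! G : Set (En n), IsSupportHyperplaneAt K x G

lemma aux_exit {E : Type*} [NormedAddCommGroup E] [NormedSpace ℝ E] {K : Set E} {x v : E}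
    (hx : x ∈ K) (hy : x + v ∉ K) : ∃ s : ℝ, 0 ≤ s ∧ s ≤ 1 ∧ x + s • v ∈ frontier K := by
  have hc : IsPreconnected ((fun s : ℝ => x + s • v) '' Icc (0:ℝ) 1) :=
    isPreconnected_Icc.image _ (by fun_prop)
  by_contra hcon
  push Not at hcon
  have hsub : ∀ s ∈ Icc (0:ℝ) 1, x + s • v ∈ interior K ∨ x + s • v ∈ (closure K)ᶜ := by
    intro s hs
    have := hcon s hs.1 hs.2
    by_contra h
    push Not at h
    exact this ⟨by simpa using h.2, h.1⟩
  obtain ⟨z, -, hz1, hz2⟩ := hc (interior K) (closure K)ᶜ isOpen_interior isClosed_closure.isOpen_compl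
    (by rintro _ ⟨s, hs, rfl⟩; exact hsub s hs)
    ⟨x, ⟨0, by simp, by simp⟩, by
      have := hsub 0 (by simp)
      simp only [zero_smul, add_zero] at this
      exact this.resolve_right (fun h => h (subset_closure hx))⟩
    ⟨x + v, ⟨1, by simp, by simp⟩, by
      have := hsub 1 (by simp)
      simp only [one_smul] at this
      exact this.resolve_left (fun h => hy (interior_subset h))⟩
  exact hz2 (subset_closure (interior_subset hz1))

lemma aux_ball {E : Type*} [NormedAddCommGroup E] [NormedSpace ℝ E] {K : Set E} {x : E}
    (hx : x ∈ interior K) (v : E) : ∃ r > 0, ∀ s : ℝ, |s| < r → x + s • v ∈ interior K := by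
  have hc : ContinuousAt (fun s : ℝ => x + s • v) 0 := by fun_prop
  have := hc.preimage_mem_nhds (t := interior K) (by simpa using isOpen_interior.mem_nhds hx)
  obtain ⟨r, hr, h⟩ := Metric.mem_nhds_iff.1 this
  exact ⟨r, hr, fun s hs => h (by simpa using hs)⟩

lemma aux_int_neg {n : ℕ} {K : Set (En n)} {p ν z : En n} (hν : ν ≠ 0)
    (hN : ∀ k ∈ K, ⟪k - p, ν⟫ ≤ 0) (hz : z ∈ interior K) : ⟪z - p, ν⟫ < 0 := by
  obtain ⟨r, hr, h⟩ := aux_ball hz ν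
  have h1 := hN _ (interior_subset (h (r/2) (by rw [abs_of_pos (by positivity)]; linarith)))
  rw [add_sub_right_comm, inner_add_left, real_inner_smul_left] at h1
  have : 0 < ⟪ν, ν⟫ := real_inner_self_pos.2 hν
  nlinarith [mul_pos hr this]

lemma aux_orth {n : ℕ} (hn : 3 ≤ n) (a b : En n) : ∃ e : En n, ‖e‖ = 1 ∧ ⟪e, a⟫ = 0 ∧ ⟪e, b⟫ = 0 := by
  classical
  let S : Submodule ℝ (En n) := Submodule.span ℝ {a, b}
  have hS : Module.finrank ℝ S ≤ 2 := by
    have := finrank_span_finset_le_card (R := ℝ) ({a, b} : Finset (En n))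
    have h2 : ({a, b} : Finset (En n)).card ≤ 2 := Finset.card_le_two
    simp only [Finset.coe_insert, Finset.coe_singleton] at this
    exact this.trans h2
  have hne : Sᗮ ≠ ⊥ := by
    intro h
    have := Submodule.finrank_add_finrank_orthogonal S
    rw [h, finrank_bot, finrank_euclideanSpace, Fintype.card_fin] at this
    omega
  obtain ⟨v, hv, hv0⟩ := Submodule.exists_mem_ne_zero_of_ne_bot hne
  have h1 := (Submodule.mem_orthogonal' S v).1 hv
  refine ⟨‖v‖⁻¹ • v, ?_, ?_, ?_⟩
  · rw [norm_smul, norm_inv, norm_norm, inv_mul_cancel₀ (norm_ne_zero_iff.2 hv0)]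
  · rw [real_inner_smul_left, h1 a (Submodule.subset_span (by simp)), mul_zero]
  · rw [real_inner_smul_left, h1 b (Submodule.subset_span (by simp)), mul_zero]

lemma aux_mult {n : ℕ} {v w : En n} (hw : ‖w‖ = 1) (h : ∀ y, ⟪y, w⟫ = 0 → ⟪y, v⟫ = 0) :
    v = ⟪v, w⟫ • w := by
  have hww : ⟪w, w⟫ = 1 := by rw [real_inner_self_eq_norm_sq, hw]; norm_num
  have h0 : ⟪v - ⟪v, w⟫ • w, w⟫ = 0 := by
    rw [inner_sub_left, real_inner_smul_left, hww]; ring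
  have h1 := h _ h0
  have h2 : ⟪v - ⟪v, w⟫ • w, v - ⟪v, w⟫ • w⟫ = 0 := by
    rw [inner_sub_right, real_inner_smul_right, h0, h1]; ring
  exact sub_eq_zero.1 (inner_self_eq_zero.1 h2)

lemma aux_half_circle {n : ℕ} (hn : 3 ≤ n) {K : Set (En n)} {δ : sphere (0 : En n) 1 → ℝ}
    (hδ : Continuous δ) (hmeet : ∀ u : sphere (0 : En n) 1, ∃ z ∈ interior K, ⟪z, (u : En n)⟫ = δ u)
    {p ν d : En n} (hν : ν ≠ 0) (hN : ∀ k ∈ K, ⟪k - p, ν⟫ ≤ 0) (hd : ⟪d, ν⟫ = 0) :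
    ∃ w : sphere (0 : En n) 1, ⟪d, (w : En n)⟫ = 0 ∧ ⟪p, (w : En n)⟫ = δ w ∧
      ∀ a c : ℝ, a • ν = c • (w : En n) → a = 0 := by
  obtain ⟨e, he, heν, hed⟩ := aux_orth hn ν d
  have hνn : 0 < ‖ν‖ := norm_pos_iff.2 hν
  set ν' : En n := ‖ν‖⁻¹ • ν with hν'
  have hν'1 : ‖ν'‖ = 1 := by
    rw [hν', norm_smul, norm_inv, norm_norm, inv_mul_cancel₀ hνn.ne']
  have heν' : ⟪e, ν'⟫ = 0 := by rw [hν', real_inner_smul_right, heν, mul_zero]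
  have hN' : ∀ k ∈ K, ⟪k - p, ν'⟫ ≤ 0 := fun k hk => by
    rw [hν', real_inner_smul_right]; exact mul_nonpos_of_nonneg_of_nonpos (by positivity) (hN k hk)
  have hν'0 : ν' ≠ 0 := by intro h; rw [h] at hν'1; simp at hν'1
  have hnorm : ∀ θ : ℝ, ‖Real.cos θ • ν' + Real.sin θ • e‖ = 1 := by
    intro θ
    have : ‖Real.cos θ • ν' + Real.sin θ • e‖ ^ 2 = 1 := by
      rw [norm_add_sq_real, norm_smul _ ν', norm_smul _ e, hν'1, he, real_inner_smul_left,
        real_inner_smul_right, real_inner_comm, heν']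
      simp [Real.cos_sq_add_sin_sq]
    have h0 := norm_nonneg (Real.cos θ • ν' + Real.sin θ • e)
    nlinarith
  let w : ℝ → sphere (0 : En n) 1 := fun θ =>
    ⟨Real.cos θ • ν' + Real.sin θ • e, by simpa using hnorm θ⟩
  have hwc : Continuous w := by
    apply Continuous.subtype_mk; fun_prop
  have hg : Continuous (fun θ => ⟪p, (w θ : En n)⟫ - δ (w θ)) := by
    have : Continuous fun θ => (w θ : En n) := continuous_subtype_val.comp hwc
    exact (continuous_const.inner this).sub (hδ.comp hwc)
  have h0 : (0:ℝ) < ⟪p, (w 0 : En n)⟫ - δ (w 0) := by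
    obtain ⟨z, hz, hzu⟩ := hmeet (w 0)
    rw [← hzu]
    have := aux_int_neg hν'0 hN' hz
    have hw0 : (w 0 : En n) = ν' := by simp [w]
    rw [hw0]; rw [inner_sub_left] at this; linarith
  have hpi : ⟪p, (w Real.pi : En n)⟫ - δ (w Real.pi) < 0 := by
    obtain ⟨z, hz, hzu⟩ := hmeet (w Real.pi)
    rw [← hzu]
    have := aux_int_neg hν'0 hN' hz
    have hw0 : (w Real.pi : En n) = -ν' := by simp [w]
    rw [hw0, inner_neg_right, inner_neg_right]; rw [inner_sub_left] at this; linarith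
  obtain ⟨θ, hθ, hθ0⟩ := intermediate_value_Icc' Real.pi_pos.le hg.continuousOn
    (show (0:ℝ) ∈ Icc _ _ from ⟨hpi.le, h0.le⟩)
  have hθ1 : θ ≠ 0 := by rintro rfl; simp only at hθ0; linarith
  have hθ2 : θ ≠ Real.pi := by rintro rfl; simp only at hθ0; linarith
  have hs : 0 < Real.sin θ := Real.sin_pos_of_pos_of_lt_pi
    (lt_of_le_of_ne hθ.1 (Ne.symm hθ1)) (lt_of_le_of_ne hθ.2 hθ2)
  refine ⟨w θ, ?_, by simp only at hθ0; linarith, ?_⟩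
  · simp only [w]
    have h1 : ⟪d, ν'⟫ = 0 := by rw [hν', real_inner_smul_right, hd, mul_zero]
    have h2 : ⟪d, e⟫ = 0 := by rw [real_inner_comm, hed]
    rw [inner_add_right, real_inner_smul_right d ν', real_inner_smul_right d e, h1, h2]; simp
  · intro a c h
    have h1 := congrArg (fun v => ⟪e, v⟫) h
    simp only [w, inner_add_right, real_inner_smul_right, heν, heν', real_inner_self_eq_norm_sq, he] at h1
    have hc : c = 0 := by
      have : c * Real.sin θ = 0 := by linarith
      exact (mul_eq_zero.1 this).resolve_right hs.ne'
    rw [hc, zero_smul] at h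
    exact (smul_eq_zero.1 h).resolve_right hν

/-- Quadratic data for all the sections. -/
def SecHyp {n : ℕ} (K : Set (En n)) (δ : sphere (0 : En n) 1 → ℝ) : Prop :=
  ∀ u : sphere (0 : En n) 1, (∃ z ∈ interior K, ⟪z, (u : En n)⟫ = δ u) ∧
    ∃ (B : En n →ₗ[ℝ] En n →ₗ[ℝ] ℝ) (L : En n →ₗ[ℝ] ℝ) (c : ℝ), (∀ x y, B x y = B y x) ∧
      (∃ y, ⟪y, (u : En n)⟫ = 0 ∧ B y y ≠ 0) ∧
      ∀ x ∈ frontier K, ⟪x, (u : En n)⟫ = δ u → B x x + L x + c = 0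

lemma aux_frontier_trans {n : ℕ} (K : Set (En n)) (p x : En n) :
    x ∈ frontier ((fun y => y + p) ⁻¹' K) ↔ x + p ∈ frontier K := by
  have := (Homeomorph.addRight p).preimage_frontier K
  exact (Set.ext_iff.1 this x).symm

lemma aux_interior_trans {n : ℕ} (K : Set (En n)) (p x : En n) :
    x ∈ interior ((fun y => y + p) ⁻¹' K) ↔ x + p ∈ interior K := by
  have := (Homeomorph.addRight p).preimage_interior K
  exact (Set.ext_iff.1 this x).symm

lemma SecHyp.translate {n : ℕ} {K : Set (En n)} {δ : sphere (0 : En n) 1 → ℝ} (h : SecHyp K δ)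
    (p : En n) : SecHyp ((fun y => y + p) ⁻¹' K) (fun u => δ u - ⟪p, (u : En n)⟫) := by
  intro u
  obtain ⟨⟨z, hz, hzu⟩, B, L, c, hB, hy, hq⟩ := h u
  refine ⟨⟨z - p, ?_, ?_⟩, B, 2 • B p + L, B p p + L p + c, hB, hy, ?_⟩
  · rw [aux_interior_trans]; simpa using hz
  · rw [inner_sub_left, hzu]
  · intro x hx hxu
    rw [aux_frontier_trans] at hx
    have := hq _ hx (by rw [inner_add_left, hxu]; ring)
    simp only [map_add, LinearMap.add_apply, LinearMap.smul_apply] at this ⊢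
    rw [hB x p] at this
    simp only [nsmul_eq_mul, Nat.cast_ofNat]
    linarith

lemma aux_small {a D : ℝ} (h : ∀ ε : ℝ, 0 < ε → ε < 1 → |a| ≤ ε * D) : a = 0 := by
  by_contra ha
  have ha' : 0 < |a| := abs_pos.2 ha
  have hD : 0 < D := by nlinarith [h (1/2) (by norm_num) (by norm_num)]
  have h1 := h (min (1/2) (|a| / (2 * D))) (by positivity) (by
    exact (min_le_left _ _).trans_lt (by norm_num))
  have h2 : min (1/2) (|a| / (2 * D)) * D ≤ |a| / (2 * D) * D := by gcongr; exact min_le_right _ _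
  have h3 : |a| / (2 * D) * D = |a| / 2 := by field_simp
  linarith

lemma aux_cone_of_L0 {n : ℕ} {K : Set (En n)} (hKconv : Convex ℝ K) (hKcl : IsClosed K)
    (h0 : (0 : En n) ∈ K) {w z : En n} (hz : z ∈ interior K) (hzw : ⟪z, w⟫ = 0)
    {B : En n →ₗ[ℝ] En n →ₗ[ℝ] ℝ} {y : En n} (hyw : ⟪y, w⟫ = 0) (hy : B y y ≠ 0)
    (hq : ∀ x ∈ frontier K, ⟪x, w⟫ = 0 → B x x = 0) :
    ∀ x ∈ K, ⟪x, w⟫ = 0 → ∀ t : ℝ, 0 ≤ t → t • x ∈ K := by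
  intro x hx hxw t ht
  by_contra hn
  obtain ⟨ε, hε, hε1, hεn⟩ : ∃ ε : ℝ, 0 < ε ∧ ε ≤ 1 ∧ t • (x + ε • (z - x)) ∉ K := by
    have hc : ContinuousAt (fun ε : ℝ => t • (x + ε • (z - x))) 0 := by fun_prop
    have := hc.preimage_mem_nhds (t := Kᶜ) (by simpa using hKcl.isOpen_compl.mem_nhds hn)
    obtain ⟨r, hr, h⟩ := Metric.mem_nhds_iff.1 this
    refine ⟨min (r/2) 1, by positivity, min_le_right _ _, h ?_⟩
    have : min (r/2) 1 ≤ r/2 := min_le_left _ _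
    rw [mem_ball_zero_iff, Real.norm_eq_abs, abs_of_pos (by positivity)]; linarith
  have hx' : x + ε • (z - x) ∈ interior K :=
    hKconv.add_smul_sub_mem_interior hx hz ⟨hε, hε1⟩
  set x' := x + ε • (z - x) with hx'd
  have hx'w : ⟪x', w⟫ = 0 := by
    rw [hx'd, inner_add_left, real_inner_smul_left, inner_sub_left, hzw, hxw]; ring
  have hnear : ∃ r > 0, ∀ s : ℝ, |s| < r → B (x' + s • y) (x' + s • y) = 0 := by
    obtain ⟨r1, hr1, h1⟩ := aux_ball hx' y
    have hc : ContinuousAt (fun s : ℝ => t • (x' + s • y)) 0 := by fun_prop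
    have := hc.preimage_mem_nhds (t := Kᶜ) (by simpa using hKcl.isOpen_compl.mem_nhds hεn)
    obtain ⟨r, hr, h⟩ := Metric.mem_nhds_iff.1 this
    refine ⟨min r r1, by positivity, fun s hs => ?_⟩
    have ha := h1 s (hs.trans_le (min_le_right _ _))
    have hb : t • (x' + s • y) ∉ K := h (by simpa using hs.trans_le (min_le_left _ _))
    set v := x' + s • y
    obtain ⟨τ, hτ0, hτ1, hτ⟩ := aux_exit (x := v) (v := (t - 1) • v) (interior_subset ha)
      (by rwa [show v + (t - 1) • v = t • v by module])
    have hvw : ⟪v, w⟫ = 0 := by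
      rw [inner_add_left, real_inner_smul_left, hx'w, hyw]; ring
    have hτ' : (1 + τ * (t - 1)) • v ∈ frontier K := by convert hτ using 1; module
    have h2 := hq _ hτ' (by rw [real_inner_smul_left, hvw, mul_zero])
    simp only [map_smul, LinearMap.smul_apply, smul_eq_mul] at h2
    have h3 : 1 + τ * (t - 1) ≠ 0 := by
      have ht0 : 0 < t := lt_of_le_of_ne ht (by rintro rfl; apply hb; rw [zero_smul]; exact h0)
      rcases hτ0.eq_or_lt with h | h
      · rw [← h]; norm_num
      · nlinarith [mul_pos h ht0]
    simpa [h3] using h2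
  obtain ⟨r, hr, h⟩ := hnear
  have e0 := h 0 (by simpa using hr)
  have e1 := h (r/2) (by rw [abs_of_pos (by positivity)]; linarith)
  have e2 := h (-(r/2)) (by rw [abs_neg, abs_of_pos (by positivity)]; linarith)
  simp only [map_add, map_smul, LinearMap.add_apply, LinearMap.smul_apply, smul_eq_mul, zero_smul,
    add_zero] at e0 e1 e2
  apply hy
  have : r^2 * B y y = 0 := by nlinarith
  exact (mul_eq_zero.1 this).resolve_left (by positivity)

lemma aux_lim {n : ℕ} {K : Set (En n)} (hKcl : IsClosed K) {x z : En n}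
    (key : ∀ ε : ℝ, 0 < ε → x + ε • z ∈ K) : x ∈ K := by
  have hc : ContinuousWithinAt (fun ε : ℝ => x + ε • z) (Ioi 0) 0 := by fun_prop
  have := hc.mem_closure (t := K) (by simp [closure_Ioi]) (fun ε hε => key ε hε)
  simpa [hKcl.closure_eq] using this

lemma aux_tan {n : ℕ} {K : Set (En n)} (hKconv : Convex ℝ K) (hKcl : IsClosed K)
    (h0 : (0 : En n) ∈ K) {w z : En n} (hz : z ∈ interior K) (hzw : ⟪z, w⟫ = 0)
    (hcone : ∀ x ∈ K, ⟪x, w⟫ = 0 → ∀ t : ℝ, 0 ≤ t → t • x ∈ K)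
    {x : En n} (hxw : ⟪x, w⟫ = 0) (hx : ∀ ν : En n, (∀ k ∈ K, ⟪k, ν⟫ ≤ 0) → ⟪x, ν⟫ ≤ 0) :
    x ∈ K := by
  have key : ∀ ε : ℝ, 0 < ε → x + ε • z ∈ K := by
    intro ε hε
    set x' := x + ε • z with hx'
    have hx'w : ⟪x', w⟫ = 0 := by
      rw [hx', inner_add_left, real_inner_smul_left, hzw, hxw]; ring
    by_contra hn
    have hd : Disjoint (interior K) ((fun t : ℝ => t • x') '' Ioi 0) := by
      rw [Set.disjoint_left]
      rintro _ ha ⟨t, ht, rfl⟩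
      simp only [mem_Ioi] at ht
      apply hn
      have := hcone _ (interior_subset ha) (by rw [real_inner_smul_left, hx'w, mul_zero]) t⁻¹
        (by positivity)
      rwa [smul_smul, inv_mul_cancel₀ ht.ne', one_smul] at this
    have hcv : Convex ℝ ((fun t : ℝ => t • x') '' Ioi 0) :=
      (convex_Ioi (0:ℝ)).is_linear_image (IsLinearMap.isLinearMap_smul' x')
    obtain ⟨f, c, hf1, hf2⟩ := geometric_hahn_banach_open hKconv.interior isOpen_interior hcv hd
    obtain ⟨ν, rfl⟩ := (InnerProductSpace.toDual ℝ (En n)).surjective f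
    simp only [InnerProductSpace.toDual_apply_apply] at hf1 hf2
    have hf2' : ∀ t : ℝ, 0 < t → c ≤ t * ⟪ν, x'⟫ := fun t ht => by
      have := hf2 _ ⟨t, ht, rfl⟩
      rwa [real_inner_smul_right] at this
    have hcl : ∀ k ∈ K, ⟪ν, k⟫ ≤ c := by
      intro k hk
      have hk' : k ∈ closure (interior K) := by
        rw [hKconv.closure_interior_eq_closure_of_nonempty_interior ⟨z, hz⟩]; exact subset_closure hk
      exact closure_minimal (t := {k | ⟪ν, k⟫ ≤ c}) (fun k hk => (hf1 k hk).le)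
        (isClosed_le (by fun_prop) (by fun_prop)) hk'
    have hc0 : 0 ≤ c := by simpa using hcl 0 h0
    have hc1 : c ≤ 0 := by
      by_contra hc
      push Not at hc
      have h1 := hf2' 1 one_pos
      have h2 := hf2' (c / (2 * ⟪ν, x'⟫)) (by have : 0 < ⟪ν, x'⟫ := by linarith
                                              positivity)
      have h3 : ⟪ν, x'⟫ ≠ 0 := by intro h; rw [h] at h1; linarith
      have h4 : c / (2 * ⟪ν, x'⟫) * ⟪ν, x'⟫ = c / 2 := by field_simp
      linarith
    have hc2 : c = 0 := le_antisymm hc1 hc0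
    subst hc2
    have h1 := hf1 z hz
    have h2 := hx ν (fun k hk => by rw [real_inner_comm]; exact hcl k hk)
    have h3 := hf2' 1 one_pos
    rw [hx', inner_add_right, real_inner_smul_right] at h3
    rw [real_inner_comm] at h2
    nlinarith
  exact aux_lim hKcl key

lemma aux_int_neg0 {n : ℕ} {K : Set (En n)} {ν z : En n} (hν : ν ≠ 0)
    (hN : ∀ k ∈ K, ⟪k, ν⟫ ≤ 0) (hz : z ∈ interior K) : ⟪z, ν⟫ < 0 := by
  have := aux_int_neg (p := 0) hν (by simpa using hN) hz
  simpa using this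

/-- if `L` vanishes at interior points of the section, it vanishes on the hyperplane -/
lemma aux_L_of_int {n : ℕ} {K : Set (En n)} {w z : En n} (hz : z ∈ interior K) (hzw : ⟪z, w⟫ = 0)
    {L : En n →ₗ[ℝ] ℝ} (h : ∀ x ∈ interior K, ⟪x, w⟫ = 0 → L x = 0) :
    ∀ y, ⟪y, w⟫ = 0 → L y = 0 := by
  intro y hy
  obtain ⟨r, hr, hb⟩ := aux_ball hz y
  have h1 := h _ (hb (r/2) (by rw [abs_of_pos (by positivity)]; linarith))
    (by rw [inner_add_left, real_inner_smul_left, hzw, hy]; ring)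
  have h2 := h z hz hzw
  simp only [map_add, map_smul, smul_eq_mul, h2, zero_add] at h1
  exact (mul_eq_zero.1 h1).resolve_left (by positivity)

lemma aux_L0_step {n : ℕ} {K : Set (En n)} (hKconv : Convex ℝ K)
    (h0 : (0 : En n) ∈ K) {w x ν y : En n} (hx : x ∈ interior K) (hxw : ⟪x, w⟫ = 0)
    (hN : ∀ k ∈ K, ⟪k, ν⟫ ≤ 0)
    {B : En n →ₗ[ℝ] En n →ₗ[ℝ] ℝ} {L : En n →ₗ[ℝ] ℝ}
    (hq : ∀ x ∈ frontier K, ⟪x, w⟫ = 0 → B x x + L x = 0)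
    (hyw : ⟪y, w⟫ = 0) (hLy : L y = 0) (hνy : 0 < ⟪y, ν⟫) : L x = 0 := by
  obtain ⟨M, hM, hMν⟩ : ∃ M : ℝ, 0 < M ∧ 0 < ⟪x + M • y, ν⟫ := by
    refine ⟨(|⟪x, ν⟫| + 1) / ⟪y, ν⟫, by positivity, ?_⟩
    rw [inner_add_left, real_inner_smul_left, div_mul_cancel₀ _ hνy.ne']
    have := neg_abs_le ⟪x, ν⟫
    linarith
  apply aux_small (D := |B x x| + (|B x (M • y)| + |B (M • y) x|) + |B (M • y) (M • y)|)
  intro ε hε hε1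
  have hεx : ε • x ∈ K := by
    have := hKconv h0 (interior_subset hx) (a := 1 - ε) (b := ε) (by linarith) hε.le (by ring)
    simpa using this
  obtain ⟨s, hs0, hs1, hs⟩ := aux_exit (x := ε • x) (v := ε • M • y) hεx (by
    intro h
    have := hN _ h
    rw [← smul_add, real_inner_smul_left] at this
    nlinarith [mul_pos hε hMν])
  have h1 := hq _ hs (by
    simp only [inner_add_left, real_inner_smul_left, hxw, hyw]; ring)
  set y' := M • y with hy'
  have hLy' : L y' = 0 := by rw [hy', map_smul, hLy, smul_zero]
  simp only [map_add, map_smul, LinearMap.add_apply, LinearMap.smul_apply, smul_eq_mul, hLy'] at h1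
  have h2 : ε * (ε * (B x x + s * (B x y' + B y' x) + s^2 * B y' y') + L x) = 0 := by
    linear_combination h1
  have h3 := (mul_eq_zero.1 h2).resolve_left hε.ne'
  have h4 : L x = -(ε * (B x x + s * (B x y' + B y' x) + s^2 * B y' y')) := by linarith
  rw [h4, abs_neg, abs_mul, abs_of_pos hε]
  gcongr
  refine (abs_add_le _ _).trans (add_le_add ((abs_add_le _ _).trans (add_le_add le_rfl ?_)) ?_)
  · rw [abs_mul, abs_of_nonneg hs0]
    have := abs_add_le (B x y') (B y' x)
    nlinarith [abs_nonneg (B x y' + B y' x)]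
  · rw [abs_mul, abs_of_nonneg (by positivity)]
    have : s^2 ≤ 1 := by nlinarith
    nlinarith [abs_nonneg (B y' y')]

lemma aux_L0_of_sing {n : ℕ} {K : Set (En n)} (hKconv : Convex ℝ K)
    (h0 : (0 : En n) ∈ K) {w z ν ν' : En n} (hw : ‖w‖ = 1) (hz : z ∈ interior K) (hzw : ⟪z, w⟫ = 0)
    (hN : ∀ k ∈ K, ⟪k, ν⟫ ≤ 0) (hN' : ∀ k ∈ K, ⟪k, ν'⟫ ≤ 0)
    (hind : ∀ a b c : ℝ, a • ν + b • ν' = c • w → a = 0 ∧ b = 0)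
    {B : En n →ₗ[ℝ] En n →ₗ[ℝ] ℝ} {L : En n →ₗ[ℝ] ℝ}
    (hq : ∀ x ∈ frontier K, ⟪x, w⟫ = 0 → B x x + L x = 0) :
    ∀ y, ⟪y, w⟫ = 0 → L y = 0 := by
  apply aux_L_of_int hz hzw
  intro x hx hxw
  by_contra hLx
  have hν0 : ν ≠ 0 := by
    rintro rfl
    have := (hind 1 0 0 (by simp)).1
    norm_num at this
  have key : ∀ ν : En n, (∀ k ∈ K, ⟪k, ν⟫ ≤ 0) → ∀ y, ⟪y, w⟫ = 0 → L y = 0 → ⟪y, ν⟫ = 0 := by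
    intro ν hN y hyw hLy
    by_contra hne
    rcases lt_or_gt_of_ne hne with h | h
    · exact hLx (aux_L0_step hKconv h0 hx hxw hN hq (y := -y) (by simp [hyw]) (by simp [hLy])
        (by simpa using h))
    · exact hLx (aux_L0_step hKconv h0 hx hxw hN hq hyw hLy h)
  have key2 : ∀ ν : En n, (∀ k ∈ K, ⟪k, ν⟫ ≤ 0) → ∀ y, ⟪y, w⟫ = 0 → ⟪y, ν⟫ = L y / L x * ⟪x, ν⟫ := by
    intro ν hN y hyw
    have := key ν hN (y - (L y / L x) • x) (by
      rw [inner_sub_left, real_inner_smul_left, hyw, hxw]; ring) (by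
      rw [map_sub, map_smul, smul_eq_mul, div_mul_cancel₀ _ hLx, sub_self])
    rw [inner_sub_left, real_inner_smul_left] at this
    linarith
  have hm := aux_mult (v := ⟪x, ν'⟫ • ν + (-⟪x, ν⟫) • ν') hw (by
    intro y hyw
    rw [inner_add_right, real_inner_smul_right, real_inner_smul_right, key2 ν hN y hyw,
      key2 ν' hN' y hyw]
    ring)
  have := (hind _ _ _ hm).2
  have h2 := aux_int_neg0 hν0 hN hx
  linarith

lemma aux_L0_of_segment {n : ℕ} {K : Set (En n)} (hKcl : IsClosed K) (hKconv : Convex ℝ K)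
    (h0 : (0 : En n) ∈ K) {w z d : En n} (hz : z ∈ interior K) (hzw : ⟪z, w⟫ = 0)
    (hdw : ⟪d, w⟫ = 0) (hd : ∀ s : ℝ, 0 < s → s • d ∉ K)
    {B : En n →ₗ[ℝ] En n →ₗ[ℝ] ℝ} {L : En n →ₗ[ℝ] ℝ} (hBd : B d d = 0) (hLd : L d = 0)
    (hq : ∀ x ∈ frontier K, ⟪x, w⟫ = 0 → B x x + L x = 0) :
    ∀ y, ⟪y, w⟫ = 0 → L y = 0 := by
  apply aux_L_of_int hz hzw
  intro x hx hxw
  obtain ⟨r, hr, hb⟩ := aux_ball hx d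
  have hxd := interior_subset (hb (r/2) (by rw [abs_of_pos (by positivity)]; linarith))
  set d' := (r/2) • d with hd'
  have hd'w : ⟪d', w⟫ = 0 := by rw [hd', real_inner_smul_left, hdw, mul_zero]
  have hBd' : B d' d' = 0 := by simp [hd', hBd]
  have hLd' : L d' = 0 := by simp [hd', hLd]
  have hd1 : ∀ s : ℝ, 0 < s → s • d' ∉ K := by
    intro s hs; rw [hd', smul_smul]; exact hd _ (by positivity)
  apply aux_small (D := |B x x| + (|B x d'| + |B d' x|))
  intro α hα hα1
  have hαx : α • (x + d') ∈ K := by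
    have := hKconv h0 hxd (a := 1 - α) (b := α) (by linarith) hα.le (by ring)
    simpa using this
  obtain ⟨s, hs0, hs1, hs⟩ := aux_exit (x := α • (x + d')) (v := -(α • x)) hαx (by
    rw [show α • (x + d') + -(α • x) = α • d' by module]; exact hd1 α hα)
  obtain ⟨β, hβ⟩ : ∃ β, β = 1 - s := ⟨_, rfl⟩
  have hs' : α • (β • x + d') ∈ frontier K := by
    convert hs using 1; rw [hβ]; module
  have hβ0 : β ≠ 0 := by
    intro h
    rw [h, zero_smul, zero_add] at hs'
    exact hd1 α hα (hKcl.frontier_subset hs')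
  have h1 := hq _ hs' (by
    simp only [inner_add_left, real_inner_smul_left, hxw, hd'w]; ring)
  simp only [map_add, map_smul, LinearMap.add_apply, LinearMap.smul_apply, smul_eq_mul, hLd', hBd'] at h1
  have h2 : (α * β) * (α * (β * B x x + (B x d' + B d' x)) + L x) = 0 := by
    linear_combination h1
  have h3 := (mul_eq_zero.1 h2).resolve_left (mul_ne_zero hα.ne' hβ0)
  have h4 : L x = -(α * (β * B x x + (B x d' + B d' x))) := by linarith
  rw [h4, abs_neg, abs_mul, abs_of_pos hα]
  gcongr
  refine (abs_add_le _ _).trans (add_le_add ?_ (abs_add_le _ _))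
  rw [abs_mul, abs_of_nonneg (by linarith)]
  nlinarith [abs_nonneg (B x x)]

/-- two independent normals from a section that is a cone -/
lemma aux_normals_of_cone {n : ℕ} (hn : 3 ≤ n) {K : Set (En n)} (hKconv : Convex ℝ K)
    (hKcl : IsClosed K) (hKlf : LineFree K)
    (h0 : (0 : En n) ∈ K) {w z ν : En n} (hz : z ∈ interior K) (hzw : ⟪z, w⟫ = 0)
    (hcone : ∀ x ∈ K, ⟪x, w⟫ = 0 → ∀ t : ℝ, 0 ≤ t → t • x ∈ K)
    (hν : ν ≠ 0) (hN : ∀ k ∈ K, ⟪k, ν⟫ ≤ 0) :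
    ∃ ν' : En n, (∀ k ∈ K, ⟪k, ν'⟫ ≤ 0) ∧ ∀ a b : ℝ, a • ν + b • ν' = 0 → a = 0 ∧ b = 0 := by
  by_contra hcon
  push Not at hcon
  obtain ⟨e, he, heν, hew⟩ := aux_orth hn ν w
  apply hKlf
  refine ⟨0, e, by rintro rfl; simp at he, fun t => ?_⟩
  rw [zero_add]
  apply aux_tan hKconv hKcl h0 hz hzw hcone
  · rw [real_inner_smul_left, hew, mul_zero]
  · intro ν' hN'
    obtain ⟨a, b, hab, hne⟩ := hcon ν' hN'
    have hb : b ≠ 0 := by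
      intro hb
      rw [hb, zero_smul, add_zero] at hab
      exact hne ((smul_eq_zero.1 hab).resolve_right hν) hb
    have h1 := congrArg (fun v => ⟪e, v⟫) hab
    simp only [inner_add_right, real_inner_smul_right, heν, inner_zero_right, mul_zero, zero_add] at h1
    have h2 := (mul_eq_zero.1 h1).resolve_left hb
    rw [real_inner_smul_left, h2, mul_zero]

lemma aux_support {n : ℕ} {K : Set (En n)} (hKconv : Convex ℝ K) (hKint : (interior K).Nonempty)
    {x : En n} (hx : x ∉ interior K) : ∃ ν : En n, ν ≠ 0 ∧ ∀ k ∈ K, ⟪k - x, ν⟫ ≤ 0 := by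
  obtain ⟨f, hf⟩ := geometric_hahn_banach_open_point hKconv.interior isOpen_interior hx
  obtain ⟨ν, rfl⟩ := (InnerProductSpace.toDual ℝ (En n)).surjective f
  simp only [InnerProductSpace.toDual_apply_apply] at hf
  refine ⟨ν, ?_, ?_⟩
  · rintro rfl
    obtain ⟨z, hz⟩ := hKint
    simpa using hf z hz
  · intro k hk
    have hk' : k ∈ closure (interior K) := by
      rw [hKconv.closure_interior_eq_closure_of_nonempty_interior hKint]; exact subset_closure hk
    have : ⟪ν, k⟫ ≤ ⟪ν, x⟫ := closure_minimal (t := {k | ⟪ν, k⟫ ≤ ⟪ν, x⟫}) (fun k hk => (hf k hk).le)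
        (isClosed_le (by fun_prop) (by fun_prop)) hk'
    rw [inner_sub_left, real_inner_comm, real_inner_comm ν x]
    linarith

/-- a set with a point having two independent normals is a cone -/
lemma aux_core {n : ℕ} (hn : 3 ≤ n) {K : Set (En n)} (hKconv : Convex ℝ K) (hKcl : IsClosed K)
    (hKint : (interior K).Nonempty) {δ : sphere (0 : En n) 1 → ℝ} (hδ : Continuous δ)
    (hS : SecHyp K δ) (h0 : (0 : En n) ∈ frontier K) {ν₀ ν₁ : En n}
    (hN0 : ∀ k ∈ K, ⟪k, ν₀⟫ ≤ 0) (hN1 : ∀ k ∈ K, ⟪k, ν₁⟫ ≤ 0)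
    (hind : ∀ a b : ℝ, a • ν₀ + b • ν₁ = 0 → a = 0 ∧ b = 0) :
    ∀ x : En n, (∀ ν : En n, (∀ k ∈ K, ⟪k, ν⟫ ≤ 0) → ⟪x, ν⟫ ≤ 0) → x ∈ K := by
  have h0K : (0 : En n) ∈ K := hKcl.frontier_subset h0
  have hν0 : ν₀ ≠ 0 := by
    rintro rfl
    have := (hind 1 0 (by simp)).1
    norm_num at this
  have hν1 : ν₁ ≠ 0 := by
    rintro rfl
    have := (hind 0 1 (by simp)).2
    norm_num at this
  set T : Set (En n) := {x | ∀ ν : En n, (∀ k ∈ K, ⟪k, ν⟫ ≤ 0) → ⟪x, ν⟫ ≤ 0} with hT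
  have hKT : K ⊆ T := fun x hx ν hν => hν x hx
  have hTconv : Convex ℝ T := by
    intro x hx y hy a b ha hb hab ν hν
    have h1 := hx ν hν
    have h2 := hy ν hν
    rw [inner_add_left, real_inner_smul_left, real_inner_smul_left]
    nlinarith
  have hTcl : IsClosed T := by
    have : T = ⋂ ν : {ν : En n // ∀ k ∈ K, ⟪k, ν⟫ ≤ 0}, {x | ⟪x, (ν : En n)⟫ ≤ 0} := by
      ext x; simp [hT]
    rw [this]
    exact isClosed_iInter fun ν => isClosed_le (by fun_prop) (by fun_prop)
  have hTint : (interior T).Nonempty := hKint.mono (interior_mono hKT)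
  have claim : ∀ x ∈ frontier T, ∀ ν' : En n, (∀ k ∈ K, ⟪k, ν'⟫ ≤ 0) → ⟪x, ν'⟫ ≠ 0 → x ∈ K := by
    intro x hx ν' hN' hν'x
    have hxT : x ∈ T := hTcl.frontier_subset hx
    obtain ⟨ν, hν, hs⟩ := aux_support hTconv hTint (x := x) hx.2
    have hx0 : ⟪x, ν⟫ = 0 := by
      have h1 := hs 0 (hKT h0K)
      have h2 := hs ((2:ℝ) • x) (by
        intro ν hν
        have := hxT ν hν
        rw [real_inner_smul_left]; linarith)
      rw [inner_sub_left] at h1 h2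
      rw [real_inner_smul_left] at h2
      rw [inner_zero_left] at h1
      linarith
    have hN : ∀ k ∈ K, ⟪k, ν⟫ ≤ 0 := by
      intro k hk
      have := hs k (hKT hk)
      rw [inner_sub_left, hx0] at this
      linarith
    obtain ⟨w, hxw, hw0, hwν⟩ := aux_half_circle hn hδ (fun u => (hS u).1) (p := 0) (d := x) hν
      (by simpa using hN) hx0
    obtain ⟨⟨z, hz, hzw⟩, B, L, c, hB, ⟨y, hyw, hy⟩, hq⟩ := hS w
    rw [← hw0, inner_zero_left] at hzw hq
    have hc : c = 0 := by simpa using hq 0 h0 (by simp)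
    subst hc
    simp only [add_zero] at hq
    have hwn : ‖(w : En n)‖ = 1 := by simpa using w.2
    have hL := aux_L0_of_sing hKconv h0K hwn hz hzw hN hN' (by
      intro a b c h
      have h1 := congrArg (fun v => ⟪x, v⟫) h
      simp only [inner_add_right, real_inner_smul_right, hx0, hxw, mul_zero, zero_add] at h1
      have hb := (mul_eq_zero.1 h1).resolve_right hν'x
      refine ⟨hwν a c ?_, hb⟩
      rw [← h, hb, zero_smul, add_zero]) hq
    have hcone := aux_cone_of_L0 hKconv hKcl h0K hz hzw hyw hy (fun x hx hxw => by
      have := hq x hx hxw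
      rwa [hL x hxw, add_zero] at this)
    exact aux_tan hKconv hKcl h0K hz hzw hcone hxw hxT
  have claim2 : ∀ y : En n, ⟪y, ν₀⟫ < 0 → ⟪y, ν₁⟫ < 0 → y ∈ T → y ∈ K := by
    intro y hy0 hy1 hyT
    obtain ⟨d, hd0, hd1⟩ : ∃ d : En n, 0 < ⟪d, ν₀⟫ ∧ ⟪d, ν₁⟫ < 0 := by
      set d₀ := ν₀ - (⟪ν₀, ν₁⟫ / ⟪ν₁, ν₁⟫) • ν₁ with hd₀
      have h11 : 0 < ⟪ν₁, ν₁⟫ := real_inner_self_pos.2 hν1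
      have h1 : ⟪d₀, ν₁⟫ = 0 := by
        rw [hd₀, inner_sub_left, real_inner_smul_left, div_mul_cancel₀ _ h11.ne', sub_self]
      have h2 : d₀ ≠ 0 := by
        intro h
        have := (hind 1 (-(⟪ν₀, ν₁⟫ / ⟪ν₁, ν₁⟫)) (by rw [← h, hd₀]; module)).1
        norm_num at this
      have h3 : ⟪d₀, ν₀⟫ = ⟪d₀, d₀⟫ := by
        nth_rw 3 [hd₀]
        rw [inner_sub_right, real_inner_smul_right, h1]; ring
      have h4 : 0 < ⟪d₀, ν₀⟫ := by rw [h3]; exact real_inner_self_pos.2 h2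
      refine ⟨d₀ - (⟪d₀, ν₀⟫ / (2 * (|⟪ν₁, ν₀⟫| + 1))) • ν₁, ?_, ?_⟩
      · rw [inner_sub_left, real_inner_smul_left]
        have h5 : ⟪d₀, ν₀⟫ / (2 * (|⟪ν₁, ν₀⟫| + 1)) * ⟪ν₁, ν₀⟫ ≤
            ⟪d₀, ν₀⟫ / (2 * (|⟪ν₁, ν₀⟫| + 1)) * (|⟪ν₁, ν₀⟫| + 1) := by
          gcongr
          linarith [le_abs_self ⟪ν₁, ν₀⟫]
        have h6 : ⟪d₀, ν₀⟫ / (2 * (|⟪ν₁, ν₀⟫| + 1)) * (|⟪ν₁, ν₀⟫| + 1) = ⟪d₀, ν₀⟫ / 2 := by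
          have : |⟪ν₁, ν₀⟫| + 1 ≠ 0 := by positivity
          field_simp
        linarith
      · rw [inner_sub_left, real_inner_smul_left, h1]
        have : 0 < ⟪d₀, ν₀⟫ / (2 * (|⟪ν₁, ν₀⟫| + 1)) * ⟪ν₁, ν₁⟫ := by positivity
        linarith
    have step : ∀ (d a b : En n), (∀ k ∈ K, ⟪k, a⟫ ≤ 0) → (∀ k ∈ K, ⟪k, b⟫ ≤ 0) → ⟪y, b⟫ < 0 →
        0 < ⟪d, a⟫ → ⟪d, b⟫ < 0 → ∃ t : ℝ, 0 ≤ t ∧ y + t • d ∈ K := by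
      intro d a b hNa hNb hyb hda hdb
      obtain ⟨s, hs0, hs1, hs⟩ := aux_exit (K := T) (x := y) (v := ((1 + |⟪y, a⟫|) / ⟪d, a⟫) • d) hyT (by
        intro h
        have := h a hNa
        rw [inner_add_left, real_inner_smul_left, div_mul_cancel₀ _ hda.ne'] at this
        linarith [neg_abs_le ⟪y, a⟫])
      refine ⟨s * ((1 + |⟪y, a⟫|) / ⟪d, a⟫), by positivity, ?_⟩
      rw [← smul_smul]
      refine claim _ hs b hNb ?_
      rw [inner_add_left, real_inner_smul_left, real_inner_smul_left]
      have h5 : 0 ≤ s * ((1 + |⟪y, a⟫|) / ⟪d, a⟫) := by positivity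
      rw [← mul_assoc]
      nlinarith
    obtain ⟨t, ht, htK⟩ := step d ν₀ ν₁ hN0 hN1 hy1 hd0 hd1
    obtain ⟨s, hs, hsK⟩ := step (-d) ν₁ ν₀ hN1 hN0 hy0 (by simpa using hd1) (by simpa using hd0)
    rcases (add_nonneg ht hs).eq_or_lt with h | h
    · have : t = 0 := by linarith
      simpa [this] using htK
    · have := hKconv htK hsK (a := s / (t + s)) (b := t / (t + s)) (by positivity) (by positivity)
        (by field_simp; ring)
      convert this using 1
      have e1 : s / (t + s) + t / (t + s) = 1 := by field_simp; ring
      have e2 : s / (t + s) * t - t / (t + s) * s = 0 := by ring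
      calc y = (1:ℝ) • y + (0:ℝ) • d := by simp
        _ = _ := by rw [← e1, ← e2]; module
  intro x hx
  obtain ⟨z, hz⟩ := hKint
  apply aux_lim hKcl (z := z)
  intro ε hε
  have hzK := interior_subset hz
  have hneg : ∀ ν : En n, ν ≠ 0 → (∀ k ∈ K, ⟪k, ν⟫ ≤ 0) → ⟪x + ε • z, ν⟫ < 0 := by
    intro ν hν hN
    have h1 := aux_int_neg0 hν hN hz
    have h2 := hx ν hN
    rw [inner_add_left, real_inner_smul_left]
    nlinarith
  refine claim2 _ (hneg _ hν0 hN0) (hneg _ hν1 hN1) ?_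
  intro ν hN
  by_cases hν : ν = 0
  · simp [hν]
  · exact (hneg ν hν hN).le

lemma aux_pos_functional {n : ℕ} {K : Set (En n)} (hKlf : LineFree K)
    (hT : ∀ x : En n, (∀ ν : En n, (∀ k ∈ K, ⟪k, ν⟫ ≤ 0) → ⟪x, ν⟫ ≤ 0) → x ∈ K) :
    ∃ u : En n, ∀ x ∈ K, x ≠ 0 → 0 < ⟪x, u⟫ := by
  set N : Set (En n) := {ν | ∀ k ∈ K, ⟪k, ν⟫ ≤ 0} with hN
  have hspan : ⊤ ≤ Submodule.span ℝ N := by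
    by_contra h
    have h1 : (Submodule.span ℝ N)ᗮ ≠ ⊥ := by
      intro h2
      rw [Submodule.orthogonal_eq_bot_iff] at h2
      exact h h2.ge
    obtain ⟨v, hv, hv0⟩ := Submodule.exists_mem_ne_zero_of_ne_bot h1
    refine hKlf ⟨0, v, hv0, fun t => hT _ fun ν hν => ?_⟩
    rw [zero_add, real_inner_smul_left,
      (Submodule.mem_orthogonal' _ v).1 hv ν (Submodule.subset_span hν), mul_zero]
  obtain ⟨ι, b, hb⟩ : ∃ (ι : Type) (b : Module.Basis ι ℝ (En n)), ∀ i, b i ∈ N :=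
    ⟨_, Module.Basis.ofSpan hspan, fun i => Module.Basis.ofSpan_subset hspan ⟨i, rfl⟩⟩
  have := Module.Finite.finite_basis b
  cases nonempty_fintype ι
  refine ⟨-∑ i, b i, fun x hx hx0 => ?_⟩
  rw [inner_neg_right, inner_sum, ← Finset.sum_neg_distrib]
  have hnn : ∀ i ∈ Finset.univ, 0 ≤ -⟪x, b i⟫ := fun i _ => by linarith [hb i x hx]
  refine lt_of_le_of_ne (Finset.sum_nonneg hnn) (fun h => hx0 ?_)
  have h2 := (Finset.sum_eq_zero_iff_of_nonneg hnn).1 h.symm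
  apply InnerProductSpace.ext_inner_left_basis b
  intro i
  have := h2 i (Finset.mem_univ _)
  rw [inner_zero_right, real_inner_comm]; linarith

lemma aux_plane_exit {n : ℕ} {K : Set (En n)}
    (hcone : ∀ x ∈ K, ∀ t : ℝ, 0 ≤ t → t • x ∈ K) (hpt : ∀ x ∈ K, -x ∈ K → x = 0)
    {e d : En n} (he : e ∈ interior K) (hd : ∀ c : ℝ, d ≠ c • e) :
    ∃ s : ℝ, d + s • e ∈ frontier K := by
  obtain ⟨r, hr, hb⟩ := aux_ball he d
  have h1 := hcone _ (interior_subset (hb (r/2) (by rw [abs_of_pos (by positivity)]; linarith))) (2/r)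
    (by positivity)
  have h2 := hcone _ (interior_subset (hb (-(r/2))
    (by rw [abs_neg, abs_of_pos (by positivity)]; linarith))) (2/r) (by positivity)
  have e1 : (2 / r) * (r / 2) = 1 := by field_simp
  have h1' : d + (2/r) • e ∈ K := by
    convert h1 using 1
    calc d + (2/r) • e = (1:ℝ) • d + (2/r) • e := by simp
      _ = _ := by rw [← e1]; module
  have h2' : -(d + (-(2/r)) • e) ∈ K := by
    convert h2 using 1
    calc -(d + (-(2/r)) • e) = -((1:ℝ) • d) + (2/r) • e := by module
      _ = _ := by rw [← e1]; module
  obtain ⟨s, -, -, hs⟩ := aux_exit (x := d + (2/r) • e) (v := (-(4/r)) • e) h1' (by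
    intro h
    rw [show d + (2/r) • e + (-(4/r)) • e = d + (-(2/r)) • e by
      rw [show (4:ℝ)/r = 2/r + 2/r by ring]; module] at h
    have := hpt _ h h2'
    apply hd (2/r)
    have h3 : d - (2/r) • e = 0 := by rw [← this]; module
    exact sub_eq_zero.1 h3)
  exact ⟨2/r + s * (-(4/r)), by convert hs using 1; module⟩

lemma aux_plane {n : ℕ} {K : Set (En n)} (hKconv : Convex ℝ K) (hKcl : IsClosed K)
    (hcone : ∀ x ∈ K, ∀ t : ℝ, 0 ≤ t → t • x ∈ K) (hpt : ∀ x ∈ K, -x ∈ K → x = 0)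
    {B : En n →ₗ[ℝ] En n →ₗ[ℝ] ℝ} (hB : ∀ x y, B x y = B y x)
    (hfr : ∀ x ∈ frontier K, B x x = 0)
    {e d : En n} (he : e ∈ interior K) (hd : ∀ c : ℝ, d ≠ c • e) :
    ∃ s₁ s₂ : ℝ, 0 < s₁ + s₂ ∧ d + s₁ • e ∈ frontier K ∧ -d + s₂ • e ∈ frontier K ∧
      2 * B d e = (s₂ - s₁) * B e e ∧ B d d = -(s₁ * s₂) * B e e := by
  obtain ⟨s₁, h1⟩ := aux_plane_exit hcone hpt he hd
  obtain ⟨s₂, h2⟩ := aux_plane_exit hcone hpt he (d := -d) (fun c h => hd (-c) (by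
    rw [neg_smul, ← h, neg_neg]))
  have k1 := hKcl.frontier_subset h1
  have k2 := hKcl.frontier_subset h2
  have hne : d + s₁ • e ≠ 0 := fun h => hd (-s₁) (by
    rw [neg_smul]; exact eq_neg_of_add_eq_zero_left h)
  have hpos : 0 < s₁ + s₂ := by
    by_contra hcon
    push Not at hcon
    apply hne
    apply hpt _ k1
    have h3 := hcone _ (interior_subset he) (-(s₁ + s₂)) (by linarith)
    have h4 := hcone _ (hKconv k2 h3 (a := 1/2) (b := 1/2) (by norm_num) (by norm_num) (by norm_num)) 2
      (by norm_num)
    convert h4 using 1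
    module
  refine ⟨s₁, s₂, hpos, h1, h2, ?_⟩
  have q1 := hfr _ h1
  have q2 := hfr _ h2
  simp only [map_add, map_smul, map_neg, LinearMap.add_apply, LinearMap.smul_apply, LinearMap.neg_apply,
    smul_eq_mul, hB e d] at q1 q2
  have h5 : 2 * B d e = (s₂ - s₁) * B e e := by
    have : (s₁ + s₂) * (2 * B d e - (s₂ - s₁) * B e e) = 0 := by linear_combination q1 - q2
    have := (mul_eq_zero.1 this).resolve_left hpos.ne'
    linarith
  exact ⟨h5, by linear_combination q1 - s₁ * h5⟩

lemma aux_ee_ne {n : ℕ} {K : Set (En n)} (hKconv : Convex ℝ K) (hKcl : IsClosed K)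
    (hcone : ∀ x ∈ K, ∀ t : ℝ, 0 ≤ t → t • x ∈ K) (hpt : ∀ x ∈ K, -x ∈ K → x = 0)
    {B : En n →ₗ[ℝ] En n →ₗ[ℝ] ℝ} (hB : ∀ x y, B x y = B y x)
    (hfr : ∀ x ∈ frontier K, B x x = 0) {y : En n} (hy : B y y ≠ 0)
    {e : En n} (he : e ∈ interior K) : B e e ≠ 0 := by
  intro h
  by_cases hd : ∀ c : ℝ, y ≠ c • e
  · obtain ⟨s₁, s₂, -, -, -, -, h2⟩ := aux_plane hKconv hKcl hcone hpt hB hfr he hd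
    rw [h, mul_zero] at h2
    exact hy h2
  · push Not at hd
    obtain ⟨c, rfl⟩ := hd
    simp [h] at hy

lemma aux_diag {n : ℕ} (B : En n →ₗ[ℝ] En n →ₗ[ℝ] ℝ) (hB : ∀ x y, B x y = B y x) :
    ∃ (b : OrthonormalBasis (Fin n) ℝ (En n)) (μ : Fin n → ℝ), ∀ i y, B (b i) y = μ i * ⟪b i, y⟫ := by
  let S : En n →ₗ[ℝ] En n :=
    { toFun := fun x => (InnerProductSpace.toDual ℝ (En n)).symm (LinearMap.toContinuousLinearMap (B x))
      map_add' := by intro x y; simp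
      map_smul' := by intro c x; simp }
  have hS : ∀ x y, ⟪S x, y⟫ = B x y := by
    intro x y
    simp [S, InnerProductSpace.toDual_symm_apply]
  have hsym : S.IsSymmetric := by
    intro x y
    rw [hS, real_inner_comm, hS, hB]
  have hfin : Module.finrank ℝ (En n) = n := by simp
  refine ⟨hsym.eigenvectorBasis hfin, hsym.eigenvalues hfin, fun i y => ?_⟩
  rw [← hS, hsym.apply_eigenvectorBasis, real_inner_smul_left]
  simp

lemma aux_diag_sum {n : ℕ} {B : En n →ₗ[ℝ] En n →ₗ[ℝ] ℝ}
    {b : OrthonormalBasis (Fin n) ℝ (En n)} {μ : Fin n → ℝ} (h : ∀ i y, B (b i) y = μ i * ⟪b i, y⟫)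
    (x : En n) : B x x = ∑ i, μ i * ⟪b i, x⟫ ^ 2 := by
  have h1 : ∀ y, B x y = ∑ i, ⟪b i, x⟫ * (μ i * ⟪b i, y⟫) := by
    intro y
    conv_lhs => rw [← b.sum_repr' x]
    simp [map_sum, h]
  rw [h1]
  exact Finset.sum_congr rfl fun i _ => by ring

lemma aux_pos0 {n : ℕ} (hn : 3 ≤ n) : 0 < n := by omega

lemma aux_final {n : ℕ} (hn : 3 ≤ n) {K : Set (En n)} (hKconv : Convex ℝ K) (hKcl : IsClosed K)
    (hcone : ∀ x ∈ K, ∀ t : ℝ, 0 ≤ t → t • x ∈ K) (hpt : ∀ x ∈ K, -x ∈ K → x = 0)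
    {B : En n →ₗ[ℝ] En n →ₗ[ℝ] ℝ} (hB : ∀ x y, B x y = B y x)
    (hfr : ∀ x ∈ frontier K, B x x = 0) {y : En n} (hy : B y y ≠ 0)
    {e : En n} (he : e ∈ interior K) (hee : B e e < 0) :
    ∃ (b : OrthonormalBasis (Fin n) ℝ (En n)) (a : Fin n → ℝ), (∀ i : Fin n, 1 ≤ (i : ℕ) → 0 < a i) ∧
      ∀ x, x ∈ frontier K ↔ ⟪b ⟨0, aux_pos0 hn⟩, x⟫ =
        Real.sqrt (∑ i ∈ Finset.univ.filter (fun i : Fin n => 1 ≤ (i : ℕ)), a i * ⟪b i, x⟫ ^ 2) := by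
  have f1 : ∀ d, B d d ≤ 0 → d ∈ K ∨ -d ∈ K := by
    intro d hdd
    by_cases hd : ∀ c : ℝ, d ≠ c • e
    · obtain ⟨s₁, s₂, hs, h1, h2, -, h4⟩ := aux_plane hKconv hKcl hcone hpt hB hfr he hd
      have hadd : ∀ x ∈ K, ∀ t : ℝ, 0 ≤ t → x + t • e ∈ K := by
        intro x hx t ht
        have := hcone _ (hKconv hx (hcone _ (interior_subset he) t ht) (a := 1/2) (b := 1/2)
          (by norm_num) (by norm_num) (by norm_num)) 2 (by norm_num)
        convert this using 1; module
      have h5 : s₁ * s₂ ≤ 0 := by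
        by_contra hc
        push Not at hc
        nlinarith [mul_neg_of_pos_of_neg hc hee]
      by_cases hs1 : s₁ ≤ 0
      · left
        have := hadd _ (hKcl.frontier_subset h1) (-s₁) (by linarith)
        convert this using 1; module
      · right
        have hs2 : s₂ ≤ 0 := by
          push Not at hs1
          by_contra hc
          push Not at hc
          nlinarith [mul_pos hs1 hc]
        have := hadd _ (hKcl.frontier_subset h2) (-s₂) (by linarith)
        convert this using 1; module
    · push Not at hd
      obtain ⟨c, rfl⟩ := hd
      rcases le_total 0 c with hc | hc
      · exact Or.inl (hcone _ (interior_subset he) c hc)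
      · right
        rw [← neg_smul]
        exact hcone _ (interior_subset he) (-c) (by linarith)
  have f2 : ∀ d, B e d = 0 → d ≠ 0 → 0 < B d d := by
    intro d hed hd0
    have hd : ∀ c : ℝ, d ≠ c • e := by
      rintro c rfl
      simp only [map_smul, smul_eq_mul] at hed
      have := (mul_eq_zero.1 hed).resolve_right hee.ne
      simp [this] at hd0
    obtain ⟨s₁, s₂, hs, h1, h2, h3, h4⟩ := aux_plane hKconv hKcl hcone hpt hB hfr he hd
    rw [hB, hed, mul_zero] at h3
    have h5 : s₂ = s₁ := by
      have := (mul_eq_zero.1 h3.symm).resolve_right hee.ne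
      linarith
    subst h5
    rw [h4]
    have : 0 < s₂ := by linarith
    nlinarith [mul_pos_of_neg_of_neg hee (neg_neg_of_pos (mul_pos this this))]
  have f3 : ∀ x ∈ K, B x x ≤ 0 := by
    intro x hx
    by_cases hd : ∀ c : ℝ, x ≠ c • e
    · obtain ⟨s₁, s₂, hs, h1, h2, -, h4⟩ := aux_plane hKconv hKcl hcone hpt hB hfr he hd
      have hs1 : s₁ ≤ 0 := by
        by_contra hc
        push Not at hc
        apply h1.2
        obtain ⟨ε, hε⟩ : ∃ ε : ℝ, ε = 1 / (1 + s₁) := ⟨_, rfl⟩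
        have hcv : x + s₁ • e ∈ interior K := by
          have hxx := hcone x hx (1 + s₁) (by linarith)
          have hε0 : 0 < s₁ / (1 + s₁) := by positivity
          have hε1 : s₁ / (1 + s₁) ≤ 1 := by rw [div_le_one (by positivity)]; linarith
          have hsc : (1 + s₁) • e ∈ interior K := by
            have hsub : (fun v : En n => (1 + s₁)⁻¹ • v) ⁻¹' interior K ⊆ K := by
              intro v hv
              have := hcone _ (interior_subset hv) (1 + s₁) (by linarith)
              rwa [smul_smul, mul_inv_cancel₀ (by positivity), one_smul] at this
            refine interior_maximal hsub (isOpen_interior.preimage (by fun_prop)) ?_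
            simp only [mem_preimage]
            rwa [smul_smul, inv_mul_cancel₀ (by positivity), one_smul]
          have := hKconv.add_smul_sub_mem_interior hxx hsc ⟨hε0, hε1⟩
          convert this using 1
          have e1 : (1 + s₁) - s₁ / (1 + s₁) * (1 + s₁) = 1 := by field_simp; ring
          have e2 : s₁ / (1 + s₁) * (1 + s₁) = s₁ := by field_simp
          calc x + s₁ • e = (1:ℝ) • x + s₁ • e := by simp
            _ = ((1 + s₁) - s₁ / (1 + s₁) * (1 + s₁)) • x + (s₁ / (1 + s₁) * (1 + s₁)) • e := by
              rw [e1, e2]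
            _ = _ := by module
        exact hcv
      rw [h4]
      have : 0 < s₂ := by linarith
      nlinarith [mul_nonneg (mul_nonneg (neg_nonneg.2 hs1) this.le) (neg_nonneg.2 hee.le)]
    · push Not at hd
      obtain ⟨c, rfl⟩ := hd
      simp only [map_smul, LinearMap.smul_apply, smul_eq_mul]
      nlinarith [mul_nonneg (mul_self_nonneg c) (neg_nonneg.2 hee.le)]
  have f4 : ∀ x ∈ interior K, B x x < 0 := fun x hx =>
    lt_of_le_of_ne (f3 x (interior_subset hx)) (aux_ee_ne hKconv hKcl hcone hpt hB hfr hy hx)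
  set i0 : Fin n := ⟨0, aux_pos0 hn⟩ with hi0
  obtain ⟨b, μ, hbμ, hμ0, hμ, hb0⟩ : ∃ (b : OrthonormalBasis (Fin n) ℝ (En n)) (μ : Fin n → ℝ),
      (∀ i y, B (b i) y = μ i * ⟪b i, y⟫) ∧ μ i0 < 0 ∧ (∀ i ≠ i0, 0 < μ i) ∧ b i0 ∈ K := by
    obtain ⟨b, μ, hbμ⟩ := aux_diag B hB
    have hself : ∀ i, B (b i) (b i) = μ i := fun i => by
      rw [hbμ, real_inner_self_eq_norm_sq, b.norm_eq_one]; ring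
    have hoff : ∀ i j, i ≠ j → B (b i) (b j) = 0 := fun i j hij => by
      rw [hbμ, b.inner_eq_zero hij, mul_zero]
    obtain ⟨i, hi⟩ : ∃ i, μ i < 0 := by
      by_contra hcon
      push Not at hcon
      have := aux_diag_sum hbμ e
      have h2 : 0 ≤ ∑ i, μ i * ⟪b i, e⟫ ^ 2 := Finset.sum_nonneg fun i _ =>
        mul_nonneg (hcon i) (sq_nonneg _)
      linarith
    have hj : ∀ j ≠ i, 0 < μ j := by
      intro j hji
      by_contra hcon
      push Not at hcon
      have hei : B e (b i) ≠ 0 := by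
        intro h
        have := f2 (b i) h (b.orthonormal.ne_zero i)
        rw [hself] at this; linarith
      have hv : B e (B e (b j) • b i - B e (b i) • b j) = 0 := by
        simp only [map_sub, map_smul, smul_eq_mul]; ring
      have hv0 : B e (b j) • b i - B e (b i) • b j ≠ 0 := by
        intro h
        have := congrArg (fun v => ⟪v, b j⟫) h
        simp only [inner_sub_left, real_inner_smul_left, b.inner_eq_zero hji.symm,
          real_inner_self_eq_norm_sq, b.norm_eq_one, inner_zero_left] at this
        apply hei; linarith
      have := f2 _ hv hv0
      simp only [map_sub, map_smul, LinearMap.sub_apply, LinearMap.smul_apply, smul_eq_mul, hself,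
        hoff i j hji.symm, hoff j i hji] at this
      nlinarith [mul_nonneg (sq_nonneg (B e (b j))) (neg_nonneg.2 hi.le),
        mul_nonneg (sq_nonneg (B e (b i))) (neg_nonneg.2 hcon)]
    let σ := Equiv.swap i i0
    have hb' : ∀ k, b.reindex σ k = b (σ k) := fun k => by simp [σ]
    have hσ : ∀ k, k ≠ i0 → σ k ≠ i := by
      intro k hk h
      apply hk
      have := congrArg σ h
      simpa [σ] using this
    have hσ0 : σ i0 = i := by simp [σ]
    rcases f1 (b i) (by rw [hself]; exact hi.le) with hK | hK
    · refine ⟨b.reindex σ, μ ∘ σ, fun k y => ?_, ?_, ?_, ?_⟩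
      · rw [hb', hbμ]; rfl
      · simpa [hσ0] using hi
      · intro k hk; exact hj _ (hσ k hk)
      · rwa [hb', hσ0]
    · have hb'' : ∀ k, (b.reindex σ).map (LinearIsometryEquiv.neg ℝ) k = -b (σ k) := fun k => by
        rw [OrthonormalBasis.map_apply, hb']; rfl
      refine ⟨(b.reindex σ).map (LinearIsometryEquiv.neg ℝ), μ ∘ σ, fun k y => ?_, ?_, ?_, ?_⟩
      · rw [hb'', map_neg, LinearMap.neg_apply, hbμ, inner_neg_left]; simp
      · simpa [hσ0] using hi
      · intro k hk; exact hj _ (hσ k hk)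
      · rwa [hb'', hσ0]
  have hfilter : Finset.univ.filter (fun i : Fin n => 1 ≤ (i : ℕ)) = Finset.univ.erase i0 := by
    ext i
    simp only [Finset.mem_filter, Finset.mem_univ, true_and, Finset.mem_erase, and_true, ne_eq, hi0,
      Fin.ext_iff]
    omega
  have hsum : ∀ x, B x x = μ i0 * ⟪b i0, x⟫ ^ 2 + ∑ i ∈ Finset.univ.erase i0, μ i * ⟪b i, x⟫ ^ 2 := by
    intro x
    rw [aux_diag_sum hbμ x]; exact (Finset.add_sum_erase _ (fun i => μ i * ⟪b i, x⟫ ^ 2) (Finset.mem_univ i0)).symm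
  have hperp : ∀ x, ⟪b i0, x⟫ = 0 → B x x ≤ 0 → x = 0 := by
    intro x hx0 hx
    rw [hsum, hx0] at hx
    have hnn : ∀ i ∈ Finset.univ.erase i0, 0 ≤ μ i * ⟪b i, x⟫ ^ 2 := fun i hi =>
      mul_nonneg (hμ i (Finset.ne_of_mem_erase hi)).le (sq_nonneg _)
    have h0 : ∑ i ∈ Finset.univ.erase i0, μ i * ⟪b i, x⟫ ^ 2 = 0 :=
      le_antisymm (by linarith) (Finset.sum_nonneg hnn)
    have h1 := (Finset.sum_eq_zero_iff_of_nonneg hnn).1 h0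
    apply InnerProductSpace.ext_inner_left_basis b.toBasis
    intro i
    rw [b.coe_toBasis, inner_zero_right]
    by_cases hi : i = i0
    · rw [hi, hx0]
    · have := h1 i (Finset.mem_erase.2 ⟨hi, Finset.mem_univ _⟩)
      exact pow_eq_zero_iff (two_ne_zero) |>.1 ((mul_eq_zero.1 this).resolve_left (hμ i hi).ne')
  have hb00 : ⟪b i0, b i0⟫ = 1 := by rw [real_inner_self_eq_norm_sq, b.norm_eq_one]; norm_num
  have hKpos : ∀ x ∈ K, 0 ≤ ⟪b i0, x⟫ := by
    intro x hx
    by_contra hc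
    push Not at hc
    obtain ⟨t, ht⟩ : ∃ t, t = -⟪b i0, x⟫ := ⟨_, rfl⟩
    have h1 := hcone _ (hKconv hx (hcone _ hb0 t (by linarith)) (a := 1/2) (b := 1/2) (by norm_num)
      (by norm_num) (by norm_num)) 2 (by norm_num)
    have h2 : x + t • b i0 ∈ K := by convert h1 using 1; module
    have h3 := hperp _ (by rw [inner_add_right, real_inner_smul_right, hb00, ht]; ring) (f3 _ h2)
    have h4 : x = 0 := by
      apply hpt x hx
      have : -x = t • b i0 := by rw [neg_eq_iff_add_eq_zero]; exact h3
      rw [this]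
      exact hcone _ hb0 t (by linarith)
    rw [h4, inner_zero_right] at hc
    linarith
  have hchar : ∀ x, x ∈ frontier K ↔ B x x = 0 ∧ 0 ≤ ⟪b i0, x⟫ := by
    intro x
    constructor
    · intro hx
      exact ⟨hfr x hx, hKpos x (hKcl.frontier_subset hx)⟩
    · rintro ⟨hx, hx0⟩
      have hxK : x ∈ K := by
        rcases f1 x hx.le with h | h
        · exact h
        · have h1 := hKpos _ h
          rw [inner_neg_right] at h1
          have h2 := hperp x (by linarith) hx.le
          rw [h2] at h ⊢
          simpa using h
      exact ⟨subset_closure hxK, fun h => (f4 x h).ne hx⟩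
  refine ⟨b, fun i => μ i / (-μ i0), ?_, ?_⟩
  · intro i hi
    refine div_pos (hμ i ?_) (by linarith)
    rintro rfl
    simp [hi0] at hi
  · intro x
    rw [hchar, hfilter, hsum]
    have e1 : ∑ i ∈ Finset.univ.erase i0, μ i / (-μ i0) * ⟪b i, x⟫ ^ 2 =
        (∑ i ∈ Finset.univ.erase i0, μ i * ⟪b i, x⟫ ^ 2) / (-μ i0) := by
      rw [Finset.sum_div]
      exact Finset.sum_congr rfl fun i _ => by ring
    rw [e1]
    set Sg := ∑ i ∈ Finset.univ.erase i0, μ i * ⟪b i, x⟫ ^ 2 with hSg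
    have hSg0 : 0 ≤ Sg := Finset.sum_nonneg fun i hi =>
      mul_nonneg (hμ i (Finset.ne_of_mem_erase hi)).le (sq_nonneg _)
    have hm : 0 < -μ i0 := by linarith
    constructor
    · rintro ⟨h1, h2⟩
      symm
      rw [Real.sqrt_eq_iff_mul_self_eq (by positivity) h2]
      first | rw [eq_div_iff hm.ne'] | rw [div_eq_iff hm.ne']
      linear_combination h1
    · intro h
      have h2 : 0 ≤ ⟪b i0, x⟫ := by rw [h]; exact Real.sqrt_nonneg _
      refine ⟨?_, h2⟩
      have h3 := (Real.sqrt_eq_iff_mul_self_eq (by positivity) h2).1 h.symm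
      first | rw [div_eq_iff hm.ne'] at h3 | rw [eq_div_iff hm.ne'] at h3
      linear_combination h3

lemma aux_orth1 {m : ℕ} (hm : 2 ≤ m) (a : En m) : ∃ e : En m, e ≠ 0 ∧ ⟪e, a⟫ = 0 := by
  classical
  let S : Submodule ℝ (En m) := Submodule.span ℝ {a}
  have hS : Module.finrank ℝ S ≤ 1 := by
    have := finrank_span_le_card (R := ℝ) ({a} : Set (En m))
    simpa using this
  have hne : Sᗮ ≠ ⊥ := by
    intro h
    have := Submodule.finrank_add_finrank_orthogonal S
    rw [h, finrank_bot, finrank_euclideanSpace, Fintype.card_fin] at this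
    omega
  obtain ⟨v, hv, hv0⟩ := Submodule.exists_mem_ne_zero_of_ne_bot hne
  have h1 := (Submodule.mem_orthogonal' S v).1 hv
  exact ⟨v, hv0, h1 a (Submodule.subset_span (by simp))⟩

lemma aux_convex_frontier {m : ℕ} (hm : 2 ≤ m) {U : Set (En m)} (hU : Convex ℝ U) (hUo : IsOpen U)
    (hUn : U.Nonempty) (hUu : U ≠ univ) (hF : Convex ℝ (frontier U)) :
    ∃ p v : En m, v ≠ 0 ∧ ∀ t : ℝ, p + t • v ∈ frontier U := by
  have hdisj : Disjoint U (frontier U) := by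
    rw [disjoint_comm, hUo.frontier_eq]; exact disjoint_sdiff_left
  obtain ⟨f, u, h1, h2⟩ := geometric_hahn_banach_open hU hUo hF hdisj
  obtain ⟨ν, rfl⟩ := (InnerProductSpace.toDual ℝ (En m)).surjective f
  simp only [InnerProductSpace.toDual_apply_apply] at h1 h2
  have h3 : ∀ x ∈ frontier U, ⟪ν, x⟫ = u := by
    intro x hx
    refine le_antisymm ?_ (h2 x hx)
    exact closure_minimal (t := {k | ⟪ν, k⟫ ≤ u}) (fun k hk => (h1 k hk).le)
        (isClosed_le (by fun_prop) (by fun_prop)) hx.1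
  obtain ⟨x0, hx0⟩ := nonempty_frontier_iff.2 ⟨hUn, hUu⟩
  obtain ⟨v, hv, hvν⟩ := aux_orth1 hm ν
  refine ⟨x0, v, hv, fun t => ?_⟩
  obtain ⟨x, hx⟩ := hUn
  have hy : ⟪ν, x0 + t • v⟫ = u := by
    rw [inner_add_right, real_inner_smul_right, h3 x0 hx0, real_inner_comm, hvν]; ring
  set y := x0 + t • v
  obtain ⟨s, hs0, hs1, hs⟩ := aux_exit (x := x) (v := y - x) hx (by
    rw [add_sub_cancel]
    intro hyU
    have := h1 y hyU
    linarith)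
  have h4 := h3 _ hs
  have h5 := h1 x hx
  rw [inner_add_right, real_inner_smul_right, inner_sub_right, hy] at h4
  have h6 : s = 1 := by
    have : (1 - s) * (⟪ν, x⟫ - u) = 0 := by linear_combination h4
    have := (mul_eq_zero.1 this).resolve_right (by linarith)
    linarith
  rw [h6, one_smul, add_sub_cancel] at hs
  exact hs

lemma aux_quadric {m : ℕ} {S : Set (En m)} (h : IsConvexQuadric S) :
    (∃ U : Set (En m), Convex ℝ U ∧ IsOpen U ∧ U.Nonempty ∧ U ≠ univ ∧ S = frontier U) ∧
    ∃ (B : En m →ₗ[ℝ] En m →ₗ[ℝ] ℝ) (L : En m →ₗ[ℝ] ℝ) (c : ℝ), (∀ x y, B x y = B y x) ∧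
      (∃ y, B y y ≠ 0) ∧ ∀ x ∈ S, B x x + L x + c = 0 := by
  obtain ⟨Q, U, ⟨⟨a, b, c, ha, ha0, hQ⟩, hQn⟩, ⟨x, hx, hU⟩, hUc, hS⟩ := h
  have hQcl : IsClosed Q := by
    rw [hQ]
    exact isClosed_eq (by fun_prop) (by fun_prop)
  have hUo : IsOpen U := by rw [hU]; exact hQcl.isOpen_compl.connectedComponentIn
  have hUQ : U ⊆ Qᶜ := by rw [hU]; exact connectedComponentIn_subset _ _
  have hFQ : frontier U ⊆ Q := by
    intro y hy
    by_contra hyQ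
    have hyo : IsOpen (connectedComponentIn Qᶜ y) := hQcl.isOpen_compl.connectedComponentIn
    have hyy : y ∈ connectedComponentIn Qᶜ y := mem_connectedComponentIn hyQ
    obtain ⟨z, hz1, hz2⟩ := mem_closure_iff.1 hy.1 _ hyo hyy
    rw [hU] at hz2
    have e1 := connectedComponentIn_eq hz1
    have e2 := connectedComponentIn_eq hz2
    apply hy.2
    rw [hUo.interior_eq, hU, e2, ← e1]
    exact hyy
  refine ⟨⟨U, hUc, hUo, ⟨x, by rw [hU]; exact mem_connectedComponentIn hx⟩, ?_, hS⟩, ?_⟩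
  · rintro rfl
    obtain ⟨q, hq⟩ := hQn
    exact hUQ (mem_univ q) hq
  · let B : En m →ₗ[ℝ] En m →ₗ[ℝ] ℝ := LinearMap.mk₂ ℝ (fun x y => ∑ i, ∑ k, a i k * x i * y k)
      (by intro x x' y; simp only [PiLp.add_apply, ← Finset.sum_add_distrib]
          exact Finset.sum_congr rfl fun i _ => Finset.sum_congr rfl fun k _ => by ring)
      (by intro t x y; simp only [PiLp.smul_apply, smul_eq_mul, Finset.mul_sum]
          exact Finset.sum_congr rfl fun i _ => Finset.sum_congr rfl fun k _ => by ring)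
      (by intro x y y'; simp only [PiLp.add_apply, ← Finset.sum_add_distrib]
          exact Finset.sum_congr rfl fun i _ => Finset.sum_congr rfl fun k _ => by ring)
      (by intro t x y; simp only [PiLp.smul_apply, smul_eq_mul, Finset.mul_sum]
          exact Finset.sum_congr rfl fun i _ => Finset.sum_congr rfl fun k _ => by ring)
    have hBa : ∀ x y, B x y = ∑ i, ∑ k, a i k * x i * y k := fun x y => by simp [B]
    let L : En m →ₗ[ℝ] ℝ :=
      { toFun := fun x => 2 * ∑ i, b i * x i
        map_add' := by intro x y; simp [mul_add, Finset.sum_add_distrib]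
        map_smul' := by
          intro t x
          simp only [PiLp.smul_apply, smul_eq_mul, RingHom.id_apply, Finset.mul_sum]
          exact Finset.sum_congr rfl fun i _ => by ring }
    have hBs : ∀ x y, B x y = B y x := by
      intro x y
      rw [hBa, hBa, Finset.sum_comm]
      refine Finset.sum_congr rfl fun i _ => Finset.sum_congr rfl fun k _ => ?_
      rw [ha.apply i k]; ring
    refine ⟨B, L, c, hBs, ?_, ?_⟩
    · by_contra hcon
      push Not at hcon
      apply ha0
      ext i k
      have h1 := hcon (EuclideanSpace.single i 1 + EuclideanSpace.single k 1)
      simp only [map_add, LinearMap.add_apply] at h1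
      rw [hcon, hcon, hBs (EuclideanSpace.single k 1)] at h1
      have h2 : B (EuclideanSpace.single i 1) (EuclideanSpace.single k 1) = a i k := by
        rw [hBa]
        simp [Finset.sum_ite_eq]
      rw [h2] at h1
      simp only [Matrix.zero_apply]
      linarith
    · intro y hy
      rw [hS] at hy
      have := hFQ hy
      rw [hQ] at this
      rw [hBa]
      exact this

lemma aux_secHyp {n : ℕ} (hn : 3 ≤ n) {K : Set (En n)} (hKconv : Convex ℝ K) (hKcl : IsClosed K)
    (hKlf : LineFree K) {δ : sphere (0 : En n) 1 → ℝ}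
    (hsec : ∀ u : sphere (0 : En n) 1,
      IsConvexQuadricIn (sphHyp δ u) (frontier K ∩ sphHyp δ u)) : SecHyp K δ := by
  intro u
  obtain ⟨-, φ, hφ, hq⟩ := hsec u
  obtain ⟨⟨U, hUc, hUo, hUn, hUu, hSU⟩, B', L', c', hB', ⟨y', hy'⟩, hq'⟩ := aux_quadric hq
  have hmem : ∀ y, ⟪φ y, (u : En n)⟫ = δ u := by
    intro y
    have : φ y ∈ sphHyp δ u := by rw [← hφ]; exact ⟨y, rfl⟩
    exact this
  have hlin : ∀ y v, φ (y + v) = φ y + φ.linearIsometry v := by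
    intro y v
    have := φ.map_vadd y v
    simpa [add_comm] using this
  constructor
  · by_contra hcon
    push Not at hcon
    have hpre : φ ⁻¹' (frontier K ∩ sphHyp δ u) = φ ⁻¹' K := by
      ext y
      constructor
      · intro hy; exact hKcl.frontier_subset hy.1
      · intro hy
        exact ⟨⟨subset_closure hy, fun h => hcon _ h (hmem y)⟩, hmem y⟩
    have hcv : Convex ℝ (frontier U) := by
      rw [← hSU, hpre]
      exact hKconv.affine_preimage φ.toAffineMap
    obtain ⟨p, v, hv, hl⟩ := aux_convex_frontier (by omega) hUc hUo hUn hUu hcv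
    apply hKlf
    refine ⟨φ p, φ.linearIsometry v, ?_, fun t => ?_⟩
    · intro h
      apply hv
      have := φ.linearIsometry.norm_map v
      rw [h, norm_zero] at this
      exact norm_eq_zero.1 this.symm
    · have := hl t
      rw [← hSU, hpre] at this
      have h2 : φ (p + t • v) ∈ K := this
      rwa [hlin, map_smul] at h2
  · obtain ⟨g, hg⟩ := LinearMap.exists_leftInverse_of_injective φ.linearIsometry.toLinearMap
      (LinearMap.ker_eq_bot.2 φ.linearIsometry.injective)
    have hg' : ∀ v, g (φ.linearIsometry v) = v := fun v => by
      have := congrArg (fun f => f v) hg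
      simpa using this
    let B : En n →ₗ[ℝ] En n →ₗ[ℝ] ℝ := B'.compl₁₂ g g
    have hB : ∀ x y, B x y = B' (g x) (g y) := fun x y => rfl
    set o := φ 0 with ho
    refine ⟨B, L' ∘ₗ g - (2:ℝ) • B o, B o o - L' (g o) + c', ?_, ?_, ?_⟩
    · intro x y; rw [hB, hB, hB']
    · refine ⟨φ.linearIsometry y', ?_, ?_⟩
      · have h1 := hmem (0 + y')
        rw [hlin, inner_add_left, hmem] at h1
        linarith
      · rw [hB, hg']; exact hy'
    · intro x hx hxu
      have hxH : x ∈ range φ := by rw [hφ]; exact hxu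
      obtain ⟨y, rfl⟩ := hxH
      have h1 := hq' y ⟨hx, hxu⟩
      have h2 : φ y = o + φ.linearIsometry y := by
        have := hlin 0 y
        rwa [zero_add] at this
      rw [h2]
      simp only [hB, map_add, LinearMap.add_apply, LinearMap.sub_apply, LinearMap.smul_apply,
        LinearMap.comp_apply, hg', smul_eq_mul]
      rw [hB' y (g o)]
      linarith

lemma aux_int_scale {n : ℕ} {K : Set (En n)} (hcone : ∀ x ∈ K, ∀ t : ℝ, 0 ≤ t → t • x ∈ K)
    {x : En n} {s : ℝ} (hs : 0 < s) (h : s • x ∈ interior K) : x ∈ interior K := by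
  have hsub : (fun v : En n => s • v) ⁻¹' interior K ⊆ K := by
    intro v hv
    have := hcone _ (interior_subset hv) s⁻¹ (by positivity)
    rwa [smul_smul, inv_mul_cancel₀ hs.ne', one_smul] at this
  exact interior_maximal hsub (isOpen_interior.preimage (by fun_prop)) h

lemma aux_main0 {n : ℕ} (hn : 3 ≤ n) {K : Set (En n)} (hKconv : Convex ℝ K) (hKcl : IsClosed K)
    (hKint : (interior K).Nonempty) (hKlf : LineFree K)
    {δ : sphere (0 : En n) 1 → ℝ} (hδ : Continuous δ)
    (hS : SecHyp K δ) (h0 : (0 : En n) ∈ frontier K) {ν₀ ν₁ : En n}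
    (hN0 : ∀ k ∈ K, ⟪k, ν₀⟫ ≤ 0) (hN1 : ∀ k ∈ K, ⟪k, ν₁⟫ ≤ 0)
    (hind : ∀ a b : ℝ, a • ν₀ + b • ν₁ = 0 → a = 0 ∧ b = 0) :
    ∃ (b : OrthonormalBasis (Fin n) ℝ (En n)) (a : Fin n → ℝ), (∀ i : Fin n, 1 ≤ (i : ℕ) → 0 < a i) ∧
      ∀ x, x ∈ frontier K ↔ ⟪b ⟨0, aux_pos0 hn⟩, x⟫ =
        Real.sqrt (∑ i ∈ Finset.univ.filter (fun i : Fin n => 1 ≤ (i : ℕ)), a i * ⟪b i, x⟫ ^ 2) := by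
  have hT := aux_core hn hKconv hKcl hKint hδ hS h0 hN0 hN1 hind
  have hcone : ∀ x ∈ K, ∀ t : ℝ, 0 ≤ t → t • x ∈ K := by
    intro x hx t ht
    apply hT
    intro ν hν
    rw [real_inner_smul_left]
    exact mul_nonpos_of_nonneg_of_nonpos ht (hν x hx)
  have hpt : ∀ x ∈ K, -x ∈ K → x = 0 := by
    intro x hx hx'
    by_contra hne
    refine hKlf ⟨0, x, hne, fun t => ?_⟩
    rw [zero_add]
    rcases le_total 0 t with ht | ht
    · exact hcone x hx t ht
    · have := hcone _ hx' (-t) (by linarith)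
      simpa using this
  obtain ⟨u, hu⟩ := aux_pos_functional hKlf hT
  obtain ⟨e, he⟩ := hKint
  have hne0 : ∀ z ∈ interior K, z ≠ 0 := by
    rintro z hz rfl
    exact h0.2 hz
  have hu0 : u ≠ 0 := by
    rintro rfl
    have := hu e (interior_subset he) (hne0 e he)
    simp at this
  have hun : 0 < ‖u‖ := norm_pos_iff.2 hu0
  let û : sphere (0 : En n) 1 := ⟨‖u‖⁻¹ • u, by
    rw [mem_sphere_zero_iff_norm, norm_smul, norm_inv, norm_norm, inv_mul_cancel₀ hun.ne']⟩
  have hûp : ∀ x ∈ K, x ≠ 0 → 0 < ⟪x, (û : En n)⟫ := by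
    intro x hx hx0
    simp only [û, real_inner_smul_right]
    exact mul_pos (by positivity) (hu x hx hx0)
  obtain ⟨⟨z, hz, hzu⟩, B, L, c, hB, ⟨y, hyu, hy⟩, hq⟩ := hS û
  obtain ⟨h, hh⟩ : ∃ h, h = δ û := ⟨_, rfl⟩
  rw [← hh] at hzu hq
  have hpos : 0 < h := by rw [← hzu]; exact hûp z (interior_subset hz) (hne0 z hz)
  let τ : En n →ₗ[ℝ] ℝ := h⁻¹ • (innerₛₗ ℝ (û : En n))
  have hτ : ∀ x, τ x = ⟪x, (û : En n)⟫ / h := by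
    intro x
    simp only [τ, LinearMap.smul_apply, innerₛₗ_apply_apply, smul_eq_mul]
    rw [real_inner_comm]; ring
  let Bh : En n →ₗ[ℝ] En n →ₗ[ℝ] ℝ := LinearMap.mk₂ ℝ
    (fun x x' => B x x' + (L x * τ x' + L x' * τ x) / 2 + c * τ x * τ x')
    (by intro x x' y; simp only [map_add, LinearMap.add_apply]; ring)
    (by intro t x y; simp only [map_smul, LinearMap.smul_apply, smul_eq_mul]; ring)
    (by intro x y y'; simp only [map_add]; ring)
    (by intro t x y; simp only [map_smul, smul_eq_mul]; ring)
  have hBh : ∀ x x', Bh x x' = B x x' + (L x * τ x' + L x' * τ x) / 2 + c * τ x * τ x' :=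
    fun x x' => by simp [Bh]
  have hBhs : ∀ x y, Bh x y = Bh y x := by
    intro x y; rw [hBh, hBh, hB]; ring
  have hBhy : Bh y y ≠ 0 := by
    rw [hBh, hτ, hyu]; simpa using hy
  have hfr : ∀ x ∈ frontier K, Bh x x = 0 := by
    intro x hx
    by_cases hx0 : x = 0
    · simp [hx0]
    have hxK := hKcl.frontier_subset hx
    have hxp := hûp x hxK hx0
    obtain ⟨s, hs⟩ : ∃ s, s = h / ⟪x, (û : En n)⟫ := ⟨_, rfl⟩
    have hs0 : 0 < s := by rw [hs]; positivity
    have hsx : s • x ∈ frontier K :=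
      ⟨subset_closure (hcone x hxK s hs0.le), fun h => hx.2 (aux_int_scale hcone hs0 h)⟩
    have hsu : ⟪s • x, (û : En n)⟫ = h := by
      rw [real_inner_smul_left, hs, div_mul_cancel₀ _ hxp.ne']
    have h1 := hq _ hsx hsu
    have h2 : Bh (s • x) (s • x) = 0 := by
      rw [hBh, hτ, hsu, div_self hpos.ne']; linarith
    simp only [map_smul, LinearMap.smul_apply, smul_eq_mul] at h2
    exact (mul_eq_zero.1 ((mul_eq_zero.1 h2).resolve_left hs0.ne')).resolve_left hs0.ne'
  have hee := aux_ee_ne hKconv hKcl hcone hpt hBhs hfr hBhy he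
  rcases lt_or_gt_of_ne hee with hlt | hgt
  · exact aux_final hn hKconv hKcl hcone hpt hBhs hfr hBhy he hlt
  · exact aux_final hn hKconv hKcl hcone hpt (B := -Bh) (by intro x y; simp [hBhs x y])
      (fun x hx => by simp [hfr x hx]) (y := y) (by simpa using hBhy) he (by simpa using hgt)

lemma aux_trans_props {n : ℕ} {K : Set (En n)} (hKconv : Convex ℝ K) (hKcl : IsClosed K)
    (hKint : (interior K).Nonempty) (hKlf : LineFree K) (p : En n) :
    Convex ℝ ((fun y => y + p) ⁻¹' K) ∧ IsClosed ((fun y => y + p) ⁻¹' K) ∧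
      (interior ((fun y => y + p) ⁻¹' K)).Nonempty ∧ LineFree ((fun y => y + p) ⁻¹' K) := by
  refine ⟨hKconv.translate_preimage_left p, hKcl.preimage (by fun_prop), ?_, ?_⟩
  · obtain ⟨z, hz⟩ := hKint
    exact ⟨z - p, by rw [aux_interior_trans]; simpa using hz⟩
  · rintro ⟨q, v, hv, h⟩
    refine hKlf ⟨q + p, v, hv, fun t => ?_⟩
    have := h t
    rw [mem_preimage] at this
    convert this using 1
    module

lemma aux_main {n : ℕ} (hn : 3 ≤ n) {K : Set (En n)} (hKconv : Convex ℝ K) (hKcl : IsClosed K)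
    (hKint : (interior K).Nonempty) (hKlf : LineFree K)
    {δ : sphere (0 : En n) 1 → ℝ} (hδ : Continuous δ)
    (hS : SecHyp K δ) {p : En n} (hp : p ∈ frontier K) {ν₀ ν₁ : En n}
    (hN0 : ∀ k ∈ K, ⟪k - p, ν₀⟫ ≤ 0) (hN1 : ∀ k ∈ K, ⟪k - p, ν₁⟫ ≤ 0)
    (hind : ∀ a b : ℝ, a • ν₀ + b • ν₁ = 0 → a = 0 ∧ b = 0) :
    ∃ (f : En n ≃ᵃⁱ[ℝ] En n) (a : Fin n → ℝ), (∀ i : Fin n, 1 ≤ (i : ℕ) → 0 < a i) ∧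
      f '' frontier K = {x : En n | x ⟨0, aux_pos0 hn⟩ =
        Real.sqrt (∑ i ∈ Finset.univ.filter (fun i : Fin n => 1 ≤ (i : ℕ)),
          a i * x i ^ 2)} := by
  obtain ⟨h1, h2, h3, h4⟩ := aux_trans_props hKconv hKcl hKint hKlf p
  obtain ⟨b, a, ha, hb⟩ := aux_main0 hn h1 h2 h3 h4
    (δ := fun u => δ u - ⟪p, (u : En n)⟫)
    (hδ.sub (continuous_const.inner continuous_subtype_val)) (hS.translate p)
    (by rw [aux_frontier_trans, zero_add]; exact hp) (ν₀ := ν₀) (ν₁ := ν₁)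
    (fun k hk => by have := hN0 _ hk; rwa [add_sub_cancel_right] at this)
    (fun k hk => by have := hN1 _ hk; rwa [add_sub_cancel_right] at this) hind
  let f : En n ≃ᵃⁱ[ℝ] En n :=
    (AffineIsometryEquiv.constVAdd ℝ (En n) (-p)).trans b.repr.toAffineIsometryEquiv
  have hf : ∀ x, f x = b.repr (x - p) := by
    intro x
    simp [f, sub_eq_neg_add]
  have hfi : ∀ x i, f x i = ⟪b i, x - p⟫ := by
    intro x i; rw [hf, b.repr_apply_apply]
  refine ⟨f, a, ha, ?_⟩
  have key : ∀ y, y ∈ frontier K ↔ f y ∈ {x : En n | x ⟨0, aux_pos0 hn⟩ =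
        Real.sqrt (∑ i ∈ Finset.univ.filter (fun i : Fin n => 1 ≤ (i : ℕ)), a i * x i ^ 2)} := by
    intro y
    have := hb (y - p)
    rw [aux_frontier_trans, sub_add_cancel] at this
    rw [this, mem_setOf_eq]
    simp only [hfi]
  ext x
  constructor
  · rintro ⟨y, hy, rfl⟩
    exact (key y).1 hy
  · intro hx
    obtain ⟨y, rfl⟩ := f.surjective x
    exact ⟨y, (key y).2 hx, rfl⟩

lemma aux_nonregular {n : ℕ} {K : Set (En n)} (hKconv : Convex ℝ K) (hKcl : IsClosed K)
    (hKint : (interior K).Nonempty) (hr : ¬ IsRegularSet K) :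
    ∃ p ∈ frontier K, ∃ ν₀ ν₁ : En n, (∀ k ∈ K, ⟪k - p, ν₀⟫ ≤ 0) ∧ (∀ k ∈ K, ⟪k - p, ν₁⟫ ≤ 0) ∧
      ∀ a b : ℝ, a • ν₀ + b • ν₁ = 0 → a = 0 ∧ b = 0 := by
  unfold IsRegularSet at hr
  push Not at hr
  obtain ⟨p, hp, hG⟩ := hr
  obtain ⟨ν₀, hν0, hN0⟩ := aux_support hKconv hKint hp.2
  have hpK := hKcl.frontier_subset hp
  have hG0 : IsSupportHyperplaneAt K p {y | ⟪y, ν₀⟫ = ⟪p, ν₀⟫} := by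
    refine ⟨⟨ν₀, _, hν0, rfl⟩, rfl, ⟨p, rfl, hpK⟩, ?_⟩
    rw [eq_empty_iff_forall_notMem]
    rintro z ⟨hz1, hz2⟩
    have := aux_int_neg hν0 hN0 hz2
    rw [inner_sub_left] at this
    have hz1' : ⟪z, ν₀⟫ = ⟪p, ν₀⟫ := hz1
    linarith
  obtain ⟨G, hGs, hGne⟩ : ∃ G, IsSupportHyperplaneAt K p G ∧ G ≠ {y | ⟪y, ν₀⟫ = ⟪p, ν₀⟫} := by
    by_contra hcon
    push Not at hcon
    exact hG ⟨_, hG0, fun G hG => hcon G hG⟩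
  obtain ⟨⟨v, c, hv, rfl⟩, hpG, -, hGi⟩ := hGs
  have hc : ⟪p, v⟫ = c := hpG
  subst hc
  have hne : ∀ z ∈ interior K, ⟪z, v⟫ ≠ ⟪p, v⟫ := fun z hz h => by
    have : z ∈ ({y | ⟪y, v⟫ = ⟪p, v⟫} ∩ interior K : Set (En n)) := ⟨h, hz⟩
    rw [hGi] at this
    exact this
  obtain ⟨ν₁, hν1, hintr⟩ : ∃ ν₁ : En n, (ν₁ = v ∨ ν₁ = -v) ∧ ∀ z ∈ interior K, ⟪z - p, ν₁⟫ ≤ 0 := by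
    by_contra hcon
    push Not at hcon
    obtain ⟨z1, hz1, h1⟩ := hcon v (Or.inl rfl)
    obtain ⟨z2, hz2, h2⟩ := hcon (-v) (Or.inr rfl)
    rw [inner_neg_right] at h2
    obtain ⟨α, hα⟩ : ∃ α, α = ⟪z1 - p, v⟫ := ⟨_, rfl⟩
    obtain ⟨β, hβ⟩ : ∃ β, β = -⟪z2 - p, v⟫ := ⟨_, rfl⟩
    rw [← hα] at h1
    rw [← hβ] at h2
    have hsum : β / (α + β) + α / (α + β) = 1 := by field_simp; ring
    have := hKconv.interior hz1 hz2 (a := β / (α + β)) (b := α / (α + β)) (by positivity)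
      (by positivity) hsum
    apply hne _ this
    rw [inner_sub_left] at hα hβ
    rw [inner_add_left, real_inner_smul_left, real_inner_smul_left,
      show ⟪z1, v⟫ = α + ⟪p, v⟫ by linarith, show ⟪z2, v⟫ = -β + ⟪p, v⟫ by linarith]
    field_simp
    ring
  have hnuone_ne : ν₁ ≠ 0 := by
    rcases hν1 with rfl | rfl
    · exact hv
    · simpa using hv
  refine ⟨p, hp, ν₀, ν₁, hN0, ?_, ?_⟩
  · intro k hk
    have hk' : k ∈ closure (interior K) := by
      rw [hKconv.closure_interior_eq_closure_of_nonempty_interior hKint]; exact subset_closure hk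
    exact closure_minimal (t := {k | ⟪k - p, ν₁⟫ ≤ 0}) hintr
      (isClosed_le (by fun_prop) (by fun_prop)) hk'
  · intro a b hab
    by_cases hb : b = 0
    · rw [hb, zero_smul, add_zero] at hab
      exact ⟨(smul_eq_zero.1 hab).resolve_right hν0, hb⟩
    exfalso
    have ha : a ≠ 0 := by
      rintro rfl
      rw [zero_smul, zero_add] at hab
      exact (smul_ne_zero hb hnuone_ne) hab
    apply hGne
    ext y
    have h1 := congrArg (fun v => ⟪y - p, v⟫) hab
    simp only [inner_add_right, real_inner_smul_right, inner_zero_right] at h1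
    have h2 : ⟪y - p, ν₁⟫ = 0 ↔ ⟪y, v⟫ = ⟪p, v⟫ := by
      rcases hν1 with rfl | rfl
      · rw [inner_sub_left, sub_eq_zero]
      · rw [inner_neg_right, neg_eq_zero, inner_sub_left, sub_eq_zero]
    have h3 : ⟪y - p, ν₀⟫ = 0 ↔ ⟪y, ν₀⟫ = ⟪p, ν₀⟫ := by
      rw [inner_sub_left, sub_eq_zero]
    rw [mem_setOf_eq, mem_setOf_eq, ← h2, ← h3]
    constructor
    · intro h
      rw [h, mul_zero, add_zero] at h1
      exact (mul_eq_zero.1 h1).resolve_left ha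
    · intro h
      rw [h, mul_zero, zero_add] at h1
      exact (mul_eq_zero.1 h1).resolve_left hb

lemma aux_nonstrict {n : ℕ} (hn : 3 ≤ n) {K : Set (En n)} (hKconv : Convex ℝ K) (hKcl : IsClosed K)
    (hKint : (interior K).Nonempty) (hKlf : LineFree K)
    {δ : sphere (0 : En n) 1 → ℝ} (hδ : Continuous δ)
    (hS : SecHyp K δ) (hs : ¬ IsStrictlyConvexSet K) :
    ∃ p ∈ frontier K, ∃ ν₀ ν₁ : En n, (∀ k ∈ K, ⟪k - p, ν₀⟫ ≤ 0) ∧ (∀ k ∈ K, ⟪k - p, ν₁⟫ ≤ 0) ∧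
      ∀ a b : ℝ, a • ν₀ + b • ν₁ = 0 → a = 0 ∧ b = 0 := by
  unfold IsStrictlyConvexSet at hs
  push Not at hs
  obtain ⟨x, hx, y, hy, hxy, hseg⟩ := hs
  obtain ⟨m, hm⟩ : ∃ m : En n, m = (1/2 : ℝ) • x + (1/2 : ℝ) • y := ⟨_, rfl⟩
  have hmF : m ∈ frontier K := hseg ⟨1/2, 1/2, by norm_num, by norm_num, by norm_num, hm.symm⟩
  have hmK := hKcl.frontier_subset hmF
  obtain ⟨ν, hν, hN⟩ := aux_support hKconv hKint hmF.2
  have hdν : ⟪y - x, ν⟫ = 0 := by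
    have h1 := hN x (hKcl.frontier_subset hx)
    have h2 := hN y (hKcl.frontier_subset hy)
    rw [hm] at h1 h2
    simp only [inner_sub_left, inner_add_left, real_inner_smul_left] at h1 h2 ⊢
    linarith
  obtain ⟨w, hdw, hmw, -⟩ := aux_half_circle hn hδ (fun u => (hS u).1) hν hN hdν
  obtain ⟨t0, ht0⟩ : ∃ t : ℝ, m + t • (y - x) ∉ K := by
    by_contra hcon
    push Not at hcon
    exact hKlf ⟨m, y - x, sub_ne_zero.2 hxy.symm, hcon⟩
  have ht00 : t0 ≠ 0 := by
    rintro rfl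
    apply ht0; simpa using hmK
  obtain ⟨d, hd⟩ : ∃ d : En n, d = t0 • (y - x) := ⟨_, rfl⟩
  rw [← hd] at ht0
  have hdw' : ⟪d, (w : En n)⟫ = 0 := by rw [hd, real_inner_smul_left, hdw, mul_zero]
  have hcompact : IsCompact (Icc (0:ℝ) 1 ∩ (fun t : ℝ => m + t • d) ⁻¹' K) :=
    isCompact_Icc.inter_right (hKcl.preimage (by fun_prop))
  obtain ⟨T, ⟨⟨hT0, hT1⟩, hTK⟩, hTmax⟩ := hcompact.exists_isGreatest
    ⟨0, by simp, by simpa using hmK⟩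
  have hTK' : m + T • d ∈ K := hTK
  have hout : ∀ s : ℝ, 0 < s → m + T • d + s • d ∉ K := by
    intro s hs hcon
    have hcon' : m + (T + s) • d ∈ K := by convert hcon using 1; module
    by_cases hle : T + s ≤ 1
    · have := hTmax ⟨⟨by linarith, hle⟩, hcon'⟩
      linarith
    · push Not at hle
      apply ht0
      have hTs : 0 < T + s := by linarith
      have := hKconv hmK hcon' (a := 1 - 1 / (T + s)) (b := 1 / (T + s))
        (by rw [sub_nonneg, div_le_one hTs]; exact hle.le) (by positivity) (by ring)
      convert this using 1
      have e1 : 1 / (T + s) * (T + s) = 1 := by field_simp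
      calc m + d = m + (1:ℝ) • d := by simp
        _ = m + (1 / (T + s) * (T + s)) • d := by rw [e1]
        _ = _ := by module
  obtain ⟨p, hp⟩ : ∃ p, p = m + T • d := ⟨_, rfl⟩
  rw [← hp] at hTK' hout
  have hpF : p ∈ frontier K := by
    refine ⟨subset_closure hTK', fun h => ?_⟩
    obtain ⟨r, hr, hb⟩ := aux_ball h d
    exact hout (r/2) (by positivity) (interior_subset (hb (r/2) (by
      rw [abs_of_pos (by positivity)]; linarith)))
  obtain ⟨h1, h2, h3, h4⟩ := aux_trans_props hKconv hKcl hKint hKlf p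
  obtain ⟨⟨z, hz, hzw⟩, B, L, c, hB, ⟨v, hvw, hv⟩, hq⟩ := hS.translate p w
  have hδw : δ w - ⟪p, (w : En n)⟫ = 0 := by
    rw [← hmw, hp, inner_add_left, real_inner_smul_left, hdw']; ring
  simp only [hδw] at hzw hq
  set K' := (fun y => y + p) ⁻¹' K with hK'
  have h0F : (0 : En n) ∈ frontier K' := by rw [aux_frontier_trans, zero_add]; exact hpF
  have h0K' : (0 : En n) ∈ K' := h2.frontier_subset h0F
  have hc : c = 0 := by simpa using hq 0 h0F (by simp)
  subst hc
  simp only [add_zero] at hq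
  obtain ⟨κ, hκ⟩ : ∃ κ : ℝ, κ = 1 / (2 * t0) := ⟨_, rfl⟩
  have hκ0 : κ ≠ 0 := by rw [hκ]; positivity
  have hκd : κ • d = (1/2 : ℝ) • (y - x) := by
    rw [hd, smul_smul, hκ]; congr 1; field_simp
  have hpoly : ∀ α : ℝ, α • d + p ∈ frontier K → α ^ 2 * B d d + α * L d = 0 := by
    intro α hα
    have := hq (α • d) (by rw [aux_frontier_trans]; exact hα) (by
      rw [real_inner_smul_left, hdw', mul_zero])
    simp only [map_smul, LinearMap.smul_apply, smul_eq_mul] at this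
    linear_combination this
  have q1 := hpoly (-T) (by convert hmF using 1; rw [hp]; module)
  have q2 := hpoly (-T - κ) (by
    convert hx using 1
    rw [hp, sub_smul, hκd, hm]; module)
  have q3 := hpoly (-T + κ) (by
    convert hy using 1
    rw [hp, add_smul, hκd, hm]; module)
  have hBd : B d d = 0 := by
    have : κ ^ 2 * B d d = 0 := by linear_combination (q2 + q3 - 2 * q1) / 2
    exact (mul_eq_zero.1 this).resolve_left (by positivity)
  have hLd : L d = 0 := by
    rw [hBd] at q1 q3
    have : κ * L d = 0 := by linear_combination q3 - q1
    exact (mul_eq_zero.1 this).resolve_left hκ0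
  have hdK' : ∀ s : ℝ, 0 < s → s • d ∉ K' := by
    intro s hs h
    apply hout s hs
    have : s • d + p ∈ K := h
    rwa [add_comm] at this
  have hL := aux_L0_of_segment h2 h1 h0K' hz hzw hdw' hdK' hBd hLd hq
  have hcone := aux_cone_of_L0 h1 h2 h0K' hz hzw hvw hv (fun x hx hxw => by
      have := hq x hx hxw
      rwa [hL x hxw, add_zero] at this)
  obtain ⟨ν₀, hν0, hN0⟩ := aux_support hKconv hKint hpF.2
  obtain ⟨ν₁, hN1, hind⟩ := aux_normals_of_cone hn h1 h2 h4 h0K' hz hzw hcone hν0 (by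
    intro k hk
    have := hN0 _ hk
    rwa [add_sub_cancel_right] at this)
  refine ⟨p, hpF, ν₀, ν₁, hN0, ?_, hind⟩
  intro k hk
  exact hN1 (k - p) (by rw [hK', mem_preimage, sub_add_cancel]; exact hk)

/-- Lemma 6: under the hypotheses of Theorem 2 with K line-free, if K is
not strictly convex or not regular, then the frontier of K is a sheet of an elliptic
cone: in suitable Cartesian coordinates it is {x : x₁ = √(a₂x₂² + ⋯ + aₙxₙ²)} with all
aᵢ > 0. -/
theorem frontier_is_cone_sheet_of_not_strictly_convex_or_not_regular
    {n : ℕ} (hn : 3 ≤ n) (K : Set (En n)) (hKconv : Convex ℝ K) (hKcl : IsClosed K)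
    (hKint : (interior K).Nonempty) (hKne : K ≠ Set.univ) (hKlf : LineFree K)
    (δ : sphere (0 : En n) 1 → ℝ) (hδ : Continuous δ)
    (hsec : ∀ u : sphere (0 : En n) 1,
      IsConvexQuadricIn (sphHyp δ u) (frontier K ∩ sphHyp δ u))
    (hns : ¬ IsStrictlyConvexSet K ∨ ¬ IsRegularSet K) :
    ∃ (f : En n ≃ᵃⁱ[ℝ] En n) (a : Fin n → ℝ), (∀ i : Fin n, 1 ≤ (i : ℕ) → 0 < a i) ∧
      f '' frontier K = {x : En n | x ⟨0, by omega⟩ =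
        Real.sqrt (∑ i ∈ Finset.univ.filter (fun i : Fin n => 1 ≤ (i : ℕ)),
          a i * x i ^ 2)} := by
  have hS := aux_secHyp hn hKconv hKcl hKlf hsec
  obtain ⟨p, hp, ν₀, ν₁, h0, h1, hind⟩ : ∃ p ∈ frontier K, ∃ ν₀ ν₁ : En n,
      (∀ k ∈ K, ⟪k - p, ν₀⟫ ≤ 0) ∧ (∀ k ∈ K, ⟪k - p, ν₁⟫ ≤ 0) ∧
      ∀ a b : ℝ, a • ν₀ + b • ν₁ = 0 → a = 0 ∧ b = 0 := by
    rcases hns with h | h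
    · exact aux_nonstrict hn hKconv hKcl hKint hKlf hδ hS h
    · exact aux_nonregular hKconv hKcl hKint h
  exact aux_main hn hKconv hKcl hKint hKlf hδ hS hp h0 h1 hind
end
end

section
/- Let n ≥ 3 and let K ⊆ ℝⁿ be a closed convex set with nonempty interior, K ≠ ℝⁿ, that is strictly convex and regular. Let δ : S^{n−1} → ℝ be continuous, H(u) = {x ∈ ℝⁿ : ⟨x, u⟩ = δ(u)}, and assume that for every u ∈ S^{n−1} the set frontier K ∩ H(u) is an (n−1)-dimensional convex quadric in H(u). Then there exists ρ > 0 such that for every u ∈ S^{n−1} and every point x ∈ frontier K ∩ H(u) there is a point z ∈ H(u) with ‖x − z‖ = ρ and {w ∈ H(u) : ‖w − z‖ ≤ ρ} ⊆ K ∩ H(u). -/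
open Set Metric RealInnerProductSpace

noncomputable section

lemma preconn_frontier {α : Type*} [TopologicalSpace α] {s t : Set α} (hs : IsPreconnected s)
    (h1 : (s ∩ t).Nonempty) (h2 : (s ∩ tᶜ).Nonempty) : (s ∩ frontier t).Nonempty := by
  by_contra hcon
  have hd : ∀ x ∈ s, x ∉ frontier t := fun x hx hf => hcon ⟨x, hx, hf⟩
  obtain ⟨a, ha, hat⟩ := h1
  obtain ⟨b, hb, hbt⟩ := h2
  have hcl : ∀ x ∈ s, x ∈ closure t → x ∈ interior t := by
    intro x hx hxc
    by_contra hxi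
    exact hd x hx ⟨hxc, hxi⟩
  obtain ⟨x, -, hx1, hx2⟩ := hs (interior t) (closure t)ᶜ isOpen_interior
    isClosed_closure.isOpen_compl
    (fun x hx => by
      by_cases hxc : x ∈ closure t
      · exact Or.inl (hcl x hx hxc)
      · exact Or.inr hxc)
    ⟨a, ha, hcl a ha (subset_closure hat)⟩
    ⟨b, hb, fun hbc => hbt (interior_subset (hcl b hb hbc))⟩
  exact hx2 (subset_closure (interior_subset hx1))

/-- Triples encoding quadratic functions. -/
abbrev Trip (n : ℕ) := (En n →L[ℝ] En n) × En n × ℝ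

/-- Value of the quadratic function. -/
def qv {n : ℕ} (T : Trip n) (x : En n) : ℝ := ⟪T.1 x, x⟫ + 2 * ⟪T.2.1, x⟫ + T.2.2

/-- Half gradient of the quadratic function. -/
def gr {n : ℕ} (T : Trip n) (x : En n) : En n := T.1 x + T.2.1

/-- A normalized quadratic function adapted to the section by `H(u)`. -/
structure Adapted {n : ℕ} (K : Set (En n)) (δ : sphere (0 : En n) 1 → ℝ)
    (u : sphere (0 : En n) 1) (T : Trip n) : Prop where
  norm_eq : ‖T‖ = 1
  sym : ∀ x y, ⟪T.1 x, y⟫ = ⟪x, T.1 y⟫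
  ker : T.1 (u : En n) = 0
  orth : ⟪T.2.1, (u : En n)⟫ = 0
  nonpos : ∀ x ∈ interior K ∩ sphHyp δ u, qv T x ≤ 0
  zero : ∀ x ∈ frontier K ∩ sphHyp δ u, qv T x = 0

lemma qv_add {n : ℕ} {T : Trip n} (hs : ∀ x y, ⟪T.1 x, y⟫ = ⟪x, T.1 y⟫) (x v : En n) :
    qv T (x + v) = qv T x + 2 * ⟪gr T x, v⟫ + ⟪T.1 v, v⟫ := by
  have h := hs v x
  rw [real_inner_comm] at h
  have h2 := real_inner_comm v (T.1 x)
  have h3 := real_inner_comm x (T.1 v)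
  simp only [qv, gr, map_add, inner_add_left, inner_add_right]
  linarith [hs x v]

lemma gr_orth {n : ℕ} {K : Set (En n)} {δ : sphere (0 : En n) 1 → ℝ}
    {u : sphere (0 : En n) 1} {T : Trip n} (h : Adapted K δ u T) (x : En n) :
    ⟪gr T x, (u : En n)⟫ = 0 := by
  simp [gr, inner_add_left, h.sym, h.ker, h.orth]

lemma crossing {n : ℕ} {K : Set (En n)} {p o : En n} (hp : p ∈ K) (ho : o ∉ K) :
    ∃ t ∈ Icc (0 : ℝ) 1, p + t • (o - p) ∈ frontier K := by
  have h1 : IsPreconnected ((fun t : ℝ => p + t • (o - p)) '' Icc (0 : ℝ) 1) :=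
    isPreconnected_Icc.image _ (by fun_prop)
  obtain ⟨_, ⟨t, ht, rfl⟩, h⟩ := preconn_frontier (t := K) h1
    ⟨p, ⟨0, by simp, by simp⟩, hp⟩ ⟨o, ⟨1, by simp, by simp⟩, ho⟩
  exact ⟨t, ht, h⟩

/-- beyond a frontier point, seen from an interior point, one leaves `K`. -/
lemma inner_int {n : ℕ} {K : Set (En n)} (hK : Convex ℝ K) {p d : En n} {s t : ℝ}
    (hp : p ∈ interior K) (hs : 0 ≤ s) (hst : s < t) (ht : p + t • d ∈ K) :
    p + s • d ∈ interior K := by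
  have ht0 : 0 < t := by linarith
  have := hK.add_smul_sub_mem_interior ht hp (t := 1 - s / t)
    ⟨by rw [sub_pos, div_lt_one ht0]; exact hst, by have := div_nonneg hs ht0.le; linarith⟩
  convert this using 1
  have e : (1 - s / t) • (p - (p + t • d)) = - ((1 - s/t) * t) • d := by
    rw [sub_add_cancel_left, smul_neg, smul_smul, neg_smul]
  rw [e, add_assoc, ← add_smul]
  congr 2
  field_simp
  ring

lemma frontier_unique {n : ℕ} {K : Set (En n)} (hK : Convex ℝ K) (hc : IsClosed K)
    {p d : En n} {s t : ℝ}
    (hp : p ∈ interior K) (hs : 0 ≤ s) (ht : 0 ≤ t) (h1 : p + s • d ∈ frontier K)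
    (h2 : p + t • d ∈ frontier K) : s = t := by
  rcases lt_trichotomy s t with h | h | h
  · exact absurd (inner_int hK hp hs h (hc.frontier_subset h2)) h1.2
  · exact h
  · exact absurd (inner_int hK hp ht h (hc.frontier_subset h1)) h2.2

lemma no_line {n : ℕ} {K : Set (En n)} (hK : Convex ℝ K) (hc : IsClosed K)
    (hKne : K ≠ Set.univ) (hKsc : IsStrictlyConvexSet K) {p e : En n} (hp : p ∈ K)
    (he : e ≠ 0) : ∃ t : ℝ, p + t • e ∉ K := by
  by_contra hcon
  push Not at hcon
  have key : ∀ x ∈ K, ∀ t : ℝ, x + t • e ∈ K := by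
    intro x hx t
    have hlim : Filter.Tendsto (fun s : ℝ => x + s • (p - x) + t • e)
        (nhdsWithin 0 (Ioi 0)) (nhds (x + t • e)) := by
      have : Continuous (fun s : ℝ => x + s • (p - x) + t • e) := by fun_prop
      have h := this.tendsto 0
      simp only [zero_smul, add_zero] at h
      exact h.mono_left nhdsWithin_le_nhds
    refine hc.mem_of_tendsto hlim ?_
    have : Ioo (0:ℝ) 1 ∈ nhdsWithin (0:ℝ) (Ioi 0) := Ioo_mem_nhdsGT one_pos
    filter_upwards [this] with s hs
    have := hK hx (hcon (t / s)) (a := 1 - s) (b := s) (by linarith [hs.2]) hs.1.le (by ring)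
    convert this using 1
    have h0 : s * (t / s) = t := by field_simp [hs.1.ne']
    rw [smul_add, smul_smul, h0, sub_smul, smul_sub, one_smul]
    abel
  obtain ⟨o, ho⟩ := (Set.ne_univ_iff_exists_notMem K).1 hKne
  obtain ⟨s, -, hs⟩ := crossing hp ho
  set x := p + s • (o - p)
  have hfr : ∀ t : ℝ, x + t • e ∈ frontier K := by
    intro t
    rw [hc.frontier_eq]
    refine ⟨key x (hc.frontier_subset hs) t, fun hi => hs.2 ?_⟩
    have hopen : IsOpen ((fun y => y + t • e) ⁻¹' interior K) :=
      isOpen_interior.preimage (by fun_prop)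
    refine mem_interior.2 ⟨_, ?_, hopen, hi⟩
    intro y hy
    have := key _ (interior_subset hy) (-t)
    simpa [add_assoc] using this
  refine hKsc x hs (x + (1:ℝ) • e) (hfr 1) (by simpa using he) ?_
  rw [segment_eq_image']
  rintro _ ⟨t, -, rfl⟩
  simpa using hfr t

lemma add_mem_sphHyp {n : ℕ} {δ : sphere (0 : En n) 1 → ℝ} {u : sphere (0 : En n) 1}
    {x v : En n} (hx : x ∈ sphHyp δ u) (hv : ⟪v, (u : En n)⟫ = 0) : x + v ∈ sphHyp δ u := by
  simp only [sphHyp, mem_ofPred_eq] at hx ⊢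
  rw [inner_add_left, hv, hx, add_zero]

lemma sub_orth {n : ℕ} {δ : sphere (0 : En n) 1 → ℝ} {u : sphere (0 : En n) 1}
    {x y : En n} (hx : x ∈ sphHyp δ u) (hy : y ∈ sphHyp δ u) : ⟪x - y, (u : En n)⟫ = 0 := by
  simp only [sphHyp, mem_ofPred_eq] at hx hy
  rw [inner_sub_left, hx, hy, sub_self]

lemma smul_orth {n : ℕ} {u v : En n} (t : ℝ) (h : ⟪v, u⟫ = 0) : ⟪t • v, u⟫ = 0 := by
  rw [real_inner_smul_left, h, mul_zero]

lemma exists_orth {n : ℕ} (hn : 3 ≤ n) (u w : En n) :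
    ∃ v : En n, v ≠ 0 ∧ ⟪v, u⟫ = 0 ∧ ⟪v, w⟫ = 0 := by
  classical
  have h1 : Module.finrank ℝ (Submodule.span ℝ ({u, w} : Set (En n))) ≤ 2 := by
    have := finrank_span_finset_le_card (R := ℝ) ({u, w} : Finset (En n))
    simp only [Finset.coe_insert, Finset.coe_singleton] at this
    exact this.trans Finset.card_le_two
  have h2 := Submodule.finrank_add_finrank_orthogonal (Submodule.span ℝ ({u, w} : Set (En n)))
  rw [finrank_euclideanSpace_fin] at h2
  have h3 : (Submodule.span ℝ ({u, w} : Set (En n)))ᗮ ≠ ⊥ := by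
    intro h
    rw [h, finrank_bot] at h2
    omega
  obtain ⟨v, hv, hv0⟩ := Submodule.exists_mem_ne_zero_of_ne_bot h3
  refine ⟨v, hv0, ?_, ?_⟩
  · exact Submodule.inner_left_of_mem_orthogonal (Submodule.subset_span (by simp)) hv
  · exact Submodule.inner_left_of_mem_orthogonal (Submodule.subset_span (by simp)) hv

/-- Gradients do not vanish on the section. -/
lemma gr_ne_zero {n : ℕ} (hn : 3 ≤ n) {K : Set (En n)} (hK : Convex ℝ K) (hc : IsClosed K)
    (hKne : K ≠ Set.univ) (hKsc : IsStrictlyConvexSet K) {δ : sphere (0 : En n) 1 → ℝ}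
    {u : sphere (0 : En n) 1} {T : Trip n} (h : Adapted K δ u T)
    {p y : En n} (hp : p ∈ interior K) (hpu : p ∈ sphHyp δ u)
    (hy : y ∈ frontier K) (hyu : y ∈ sphHyp δ u) : gr T y ≠ 0 := by
  intro hg
  -- a second frontier point
  obtain ⟨v, hv0, hvu, hvw⟩ := exists_orth hn (u : En n) (p - y)
  obtain ⟨t0, ht0⟩ := no_line hK hc hKne hKsc (interior_subset hp) hv0
  obtain ⟨s, -, hz⟩ := crossing (interior_subset hp) ht0
  rw [add_sub_cancel_left, smul_smul] at hz
  set r := s * t0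
  have hr0 : r ≠ 0 := by
    intro h0
    rw [h0, zero_smul, add_zero] at hz
    exact hz.2 hp
  have hzy : y ≠ p + r • v := by
    intro h0
    have h1 : p - y = - (r • v) := by rw [h0]; abel
    rw [h1, inner_neg_right, real_inner_smul_right, neg_eq_zero, mul_eq_zero] at hvw
    rcases hvw with h2 | h2
    · exact hr0 h2
    · exact hv0 (inner_self_eq_zero.1 h2)
  have hzu : p + r • v ∈ sphHyp δ u := add_mem_sphHyp hpu (smul_orth r hvu)
  generalize p + r • v = z at hz hzy hzu
  -- interior point on the chord
  have hns := hKsc y hy z hz hzy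
  rw [segment_eq_image', Set.not_subset] at hns
  obtain ⟨_, ⟨θ, hθ, rfl⟩, hm⟩ := hns
  simp only at hm
  have hmK : y + θ • (z - y) ∈ K :=
    hK.add_smul_sub_mem (hc.frontier_subset hy) (hc.frontier_subset hz) hθ
  have hmI : y + θ • (z - y) ∈ interior K := by
    by_contra h0
    exact hm (hc.frontier_eq ▸ ⟨hmK, h0⟩)
  have hθ0 : 0 < θ := by
    rcases hθ.1.lt_or_eq with h1 | h1
    · exact h1
    · exfalso
      rw [← h1, zero_smul, add_zero] at hmI
      exact hy.2 hmI
  have hθ1 : θ < 1 := by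
    rcases hθ.2.lt_or_eq with h1 | h1
    · exact h1
    · exfalso
      rw [h1, one_smul, add_sub_cancel] at hmI
      exact hz.2 hmI
  set d := θ • (z - y) with hd
  have hdu : ⟪d, (u : En n)⟫ = 0 := smul_orth _ (sub_orth hzu hyu)
  set R : ℝ := 1 / θ + 1 with hR
  have hR1 : 1 < R := by have : 0 < 1 / θ := by positivity
                         linarith
  have hoK : y + R • d ∉ K := by
    intro ho
    apply hz.2
    have hθ' : 1 < 1 / θ := by rw [lt_div_iff₀ hθ0]; linarith
    have := inner_int hK hmI (d := d) (s := 1 / θ - 1) (t := 1 / θ) (by linarith) (by linarith)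
      (by convert ho using 1; rw [hR, add_smul]; simp only [one_smul]; abel)
    convert this using 1
    rw [sub_smul, one_smul, hd, smul_smul, one_div, inv_mul_cancel₀ hθ0.ne', one_smul]
    abel
  -- quadratic form vanishes near d
  have hzero : ∀ d' : En n, ⟪d', (u : En n)⟫ = 0 → y + d' ∈ interior K → y + R • d' ∉ K →
      ⟪T.1 d', d'⟫ = 0 := by
    intro d' hd' h1 h2
    obtain ⟨t, ht, hf⟩ := crossing (interior_subset h1) h2
    have e : y + d' + t • (y + R • d' - (y + d')) = y + (1 + t * (R - 1)) • d' := by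
      module
    rw [e] at hf
    have hq := h.zero _ ⟨hf, add_mem_sphHyp hyu (smul_orth _ hd')⟩
    rw [qv_add h.sym, h.zero y ⟨hy, hyu⟩, hg, inner_zero_left, map_smul, real_inner_smul_left,
      real_inner_smul_right] at hq
    have hpos : 0 < 1 + t * (R - 1) := by
      have := mul_nonneg ht.1 (by linarith : 0 ≤ R - 1)
      linarith
    simpa [hpos.ne'] using hq
  have hw : ∀ w : En n, ⟪w, (u : En n)⟫ = 0 → ⟪T.1 w, w⟫ = 0 := by
    intro w hw
    have c1 : Continuous (fun t : ℝ => y + (d + t • w)) := by fun_prop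
    have c2 : Continuous (fun t : ℝ => y + R • (d + t • w)) := by fun_prop
    have o1 : (fun t : ℝ => y + (d + t • w)) ⁻¹' interior K ∈ nhds (0 : ℝ) :=
      (isOpen_interior.preimage c1).mem_nhds (by simpa using hmI)
    have o2 : (fun t : ℝ => y + R • (d + t • w)) ⁻¹' Kᶜ ∈ nhds (0 : ℝ) :=
      (hc.isOpen_compl.preimage c2).mem_nhds (by simpa using hoK)
    obtain ⟨ε, hε, hball⟩ := Metric.mem_nhds_iff.1 (Filter.inter_mem o1 o2)
    have hq : ∀ t : ℝ, |t| < ε → ⟪T.1 (d + t • w), d + t • w⟫ = 0 := by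
      intro t ht
      have hb := hball (show t ∈ Metric.ball (0:ℝ) ε by simpa using ht)
      refine hzero _ ?_ hb.1 hb.2
      rw [inner_add_left, hdu, smul_orth t hw, add_zero]
    have q0 := hq 0 (by simpa using hε)
    have q1 := hq (ε / 2) (by rw [abs_of_pos (by linarith)]; linarith)
    have q2 := hq (-(ε / 2)) (by rw [abs_neg, abs_of_pos (by linarith)]; linarith)
    simp only [zero_smul, add_zero] at q0
    simp only [map_add, map_smul, inner_add_left, inner_add_right, real_inner_smul_left,
      real_inner_smul_right] at q1 q2
    have : (ε / 2) * ((ε / 2) * ⟪T.1 w, w⟫) = 0 := by linarith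
    simpa [hε.ne'] using this
  have hA0 : ∀ x : En n, ⟪T.1 x, x⟫ = 0 := by
    intro x
    have hu1 : ⟪(u : En n), (u : En n)⟫ = 1 := by
      rw [real_inner_self_eq_norm_sq]; simp
    have h1 := hw (x - ⟪x, (u : En n)⟫ • (u : En n)) (by
      rw [inner_sub_left, real_inner_smul_left, hu1]; ring)
    rw [map_sub, map_smul, h.ker, smul_zero, sub_zero, inner_sub_right, real_inner_smul_right,
      h.sym x u, h.ker, inner_zero_right] at h1
    linarith
  have hsymm : (T.1 : En n →ₗ[ℝ] En n).IsSymmetric := fun x y => h.sym x y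
  have hA : T.1 = 0 := by
    have := hsymm.inner_map_self_eq_zero.1 hA0
    ext1 x
    exact LinearMap.congr_fun this x
  have hb : T.2.1 = 0 := by simpa [gr, hA] using hg
  have hcc : T.2.2 = 0 := by
    have := h.zero y ⟨hy, hyu⟩
    simpa [qv, hA, hb] using this
  have hT : T = 0 := Prod.ext hA (Prod.ext hb hcc)
  have := h.norm_eq
  rw [hT, norm_zero] at this
  exact zero_ne_one this

/-- The gradient is a strict outward normal. -/
lemma gr_strict {n : ℕ} (hn : 3 ≤ n) {K : Set (En n)} (hK : Convex ℝ K) (hc : IsClosed K)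
    (hKne : K ≠ Set.univ) (hKsc : IsStrictlyConvexSet K) {δ : sphere (0 : En n) 1 → ℝ}
    {u : sphere (0 : En n) 1} {T : Trip n} (h : Adapted K δ u T)
    {p y : En n} (hp : p ∈ interior K) (hpu : p ∈ sphHyp δ u)
    (hy : y ∈ frontier K) (hyu : y ∈ sphHyp δ u) : ⟪gr T y, p - y⟫ < 0 := by
  have hweak : ∀ w ∈ interior K, w ∈ sphHyp δ u → ⟪gr T y, w - y⟫ ≤ 0 := by
    intro w hw hwu
    by_contra hpos
    push Not at hpos
    have hlim : Filter.Tendsto (fun t : ℝ => 2 * ⟪gr T y, w - y⟫ + t * ⟪T.1 (w - y), w - y⟫)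
        (nhdsWithin 0 (Ioi 0)) (nhds (2 * ⟪gr T y, w - y⟫)) := by
      have : Continuous (fun t : ℝ => 2 * ⟪gr T y, w - y⟫ + t * ⟪T.1 (w - y), w - y⟫) := by
        fun_prop
      have h := this.tendsto 0
      simp only [zero_mul, add_zero] at h
      exact h.mono_left nhdsWithin_le_nhds
    have hle : 2 * ⟪gr T y, w - y⟫ ≤ 0 := by
      refine le_of_tendsto hlim ?_
      filter_upwards [Ioo_mem_nhdsGT (one_pos : (0:ℝ) < 1)] with t ht
      have hi := hK.add_smul_sub_mem_interior (hc.frontier_subset hy) hw (t := t) ⟨ht.1, ht.2.le⟩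
      have hq := h.nonpos _ ⟨hi, add_mem_sphHyp hyu (smul_orth t (sub_orth hwu hyu))⟩
      rw [qv_add h.sym, h.zero y ⟨hy, hyu⟩, map_smul, real_inner_smul_left,
        real_inner_smul_right, real_inner_smul_right] at hq
      have h3 : t * (2 * ⟪gr T y, w - y⟫ + t * ⟪T.1 (w - y), w - y⟫) ≤ 0 := by linarith
      by_contra h4
      push Not at h4
      have := mul_pos ht.1 h4
      linarith
    linarith
  have hg := gr_ne_zero hn hK hc hKne hKsc h hp hpu hy hyu
  have c1 : Continuous (fun t : ℝ => p + t • gr T y) := by fun_prop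
  have o1 : (fun t : ℝ => p + t • gr T y) ⁻¹' interior K ∈ nhds (0 : ℝ) :=
    (isOpen_interior.preimage c1).mem_nhds (by simpa using hp)
  obtain ⟨ε, hε, hball⟩ := Metric.mem_nhds_iff.1 o1
  have hb := hball (show ε / 2 ∈ Metric.ball (0:ℝ) ε by
    simp [abs_of_pos hε, hε])
  have h5 := hweak _ hb (add_mem_sphHyp hpu (smul_orth _ (gr_orth h y)))
  rw [add_sub_right_comm, inner_add_right, real_inner_smul_right] at h5
  have h6 : 0 < ⟪gr T y, gr T y⟫ := real_inner_self_pos.2 hg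
  have := mul_pos (half_pos hε) h6
  linarith

section

open Filter Topology

lemma ultra_lim {ι X : Type*} [TopologicalSpace X] (F : Ultrafilter ι) {f : ι → X} {s : Set X}
    (hs : IsCompact s) (hf : ∀ᶠ i in (F : Filter ι), f i ∈ s) :
    ∃ x ∈ s, Tendsto f F (𝓝 x) := by
  obtain ⟨x, hx, h⟩ := hs.ultrafilter_le_nhds (F.map f) (by
    rw [le_principal_iff]; exact hf)
  exact ⟨x, hx, h⟩

lemma tendsto_clm {ι : Type*} {n : ℕ} {F : Filter ι} {A : ι → En n →L[ℝ] En n} {x : ι → En n}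
    {A0 : En n →L[ℝ] En n}
    {x0 : En n} (hA : Tendsto A F (𝓝 A0)) (hx : Tendsto x F (𝓝 x0)) :
    Tendsto (fun i => A i (x i)) F (𝓝 (A0 x0)) := by
  have h0 : Continuous (fun z : (En n →L[ℝ] En n) × En n => z.1 z.2) := by fun_prop
  have h1 := h0.tendsto (A0, x0)
  have h2 : Tendsto (fun i => (A i, x i)) F (𝓝 (A0, x0)) := hA.prodMk_nhds hx
  exact Tendsto.comp (g := fun z : (En n →L[ℝ] En n) × En n => z.1 z.2) h1 h2

lemma tendsto_gr {ι : Type*} {n : ℕ} {F : Filter ι} {T : ι → Trip n} {x : ι → En n} {T0 : Trip n}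
    {x0 : En n} (hT : Tendsto T F (𝓝 T0)) (hx : Tendsto x F (𝓝 x0)) :
    Tendsto (fun i => gr (T i) (x i)) F (𝓝 (gr T0 x0)) := by
  have hA : Tendsto (fun i => (T i).1) F (𝓝 T0.1) := hT.fst_nhds
  have hb : Tendsto (fun i => (T i).2.1) F (𝓝 T0.2.1) := hT.snd_nhds.fst_nhds
  exact (tendsto_clm hA hx).add hb

lemma tendsto_qv {ι : Type*} {n : ℕ} {F : Filter ι} {T : ι → Trip n} {x : ι → En n} {T0 : Trip n}
    {x0 : En n} (hT : Tendsto T F (𝓝 T0)) (hx : Tendsto x F (𝓝 x0)) :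
    Tendsto (fun i => qv (T i) (x i)) F (𝓝 (qv T0 x0)) := by
  have hA : Tendsto (fun i => (T i).1) F (𝓝 T0.1) := hT.fst_nhds
  have hb : Tendsto (fun i => (T i).2.1) F (𝓝 T0.2.1) := hT.snd_nhds.fst_nhds
  have hc : Tendsto (fun i => (T i).2.2) F (𝓝 T0.2.2) := hT.snd_nhds.snd_nhds
  exact (((tendsto_clm hA hx).inner hx).add ((hb.inner hx).const_mul 2)).add hc

/-- Projection onto the hyperplane. -/
def prH {n : ℕ} (δ : sphere (0 : En n) 1 → ℝ) (p : En n) (u : sphere (0 : En n) 1) : En n :=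
  p + (δ u - ⟪p, (u : En n)⟫) • (u : En n)

lemma prH_mem {n : ℕ} (δ : sphere (0 : En n) 1 → ℝ) (p : En n) (u : sphere (0 : En n) 1) :
    prH δ p u ∈ sphHyp δ u := by
  have hu1 : ⟪(u : En n), (u : En n)⟫ = 1 := by
    rw [real_inner_self_eq_norm_sq]; simp
  change ⟪prH δ p u, (u : En n)⟫ = δ u
  rw [prH, inner_add_left, real_inner_smul_left, hu1]
  ring

lemma prH_tendsto {ι : Type*} {n : ℕ} {δ : sphere (0 : En n) 1 → ℝ} (hδ : Continuous δ)
    {F : Filter ι} {u : ι → sphere (0 : En n) 1} {u0 : sphere (0 : En n) 1}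
    (hu : Tendsto u F (𝓝 u0)) {p : En n} (hp : p ∈ sphHyp δ u0) :
    Tendsto (fun i => prH δ p (u i)) F (𝓝 p) := by
  have hc : Continuous (fun u => prH δ p u) := by
    unfold prH
    fun_prop
  have h := (hc.tendsto u0).comp hu
  have e : prH δ p u0 = p := by
    have : ⟪p, (u0 : En n)⟫ = δ u0 := hp
    simp [prH, this]
  rw [e] at h
  exact h

lemma sphHyp_closed {ι : Type*} {n : ℕ} {δ : sphere (0 : En n) 1 → ℝ} (hδ : Continuous δ)
    {F : Filter ι} [F.NeBot] {u : ι → sphere (0 : En n) 1} {u0 : sphere (0 : En n) 1}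
    (hu : Tendsto u F (𝓝 u0)) {x : ι → En n} {x0 : En n} (hx : Tendsto x F (𝓝 x0))
    (hm : ∀ᶠ i in F, x i ∈ sphHyp δ (u i)) : x0 ∈ sphHyp δ u0 := by
  have hu' : Tendsto (fun i => (u i : En n)) F (𝓝 (u0 : En n)) :=
    (continuous_subtype_val.tendsto u0).comp hu
  have h1 : Tendsto (fun i => ⟪x i, (u i : En n)⟫) F (𝓝 ⟪x0, (u0 : En n)⟫) := hx.inner hu'
  have h2 : Tendsto (fun i => δ (u i)) F (𝓝 (δ u0)) := (hδ.tendsto u0).comp hu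
  have h3 : (fun i => ⟪x i, (u i : En n)⟫) =ᶠ[F] (fun i => δ (u i)) := hm
  exact tendsto_nhds_unique (h1.congr' h3) h2

/-- Adaptedness passes to limits. -/
lemma adapted_limit {ι : Type*} {n : ℕ} {K : Set (En n)} (hK : Convex ℝ K) (hc : IsClosed K)
    {δ : sphere (0 : En n) 1 → ℝ} (hδ : Continuous δ)
    (F : Ultrafilter ι) {u : ι → sphere (0 : En n) 1} {u0 : sphere (0 : En n) 1}
    {T : ι → Trip n} {T0 : Trip n}
    (hu : Tendsto u F (𝓝 u0)) (hT : Tendsto T F (𝓝 T0)) (h : ∀ i, Adapted K δ (u i) (T i))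
    (hne : (interior K ∩ sphHyp δ u0).Nonempty) : Adapted K δ u0 T0 := by
  have hu' : Tendsto (fun i => (u i : En n)) F (𝓝 (u0 : En n)) :=
    (continuous_subtype_val.tendsto u0).comp hu
  have hA : Tendsto (fun i => (T i).1) F (𝓝 T0.1) := (continuous_fst.tendsto T0).comp hT
  have hb : Tendsto (fun i => (T i).2.1) F (𝓝 T0.2.1) :=
    ((continuous_fst.comp continuous_snd).tendsto T0).comp hT
  have hAx : ∀ x : En n, Tendsto (fun i => (T i).1 x) F (𝓝 (T0.1 x)) := fun x =>
    tendsto_clm hA tendsto_const_nhds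
  refine ⟨?_, ?_, ?_, ?_, ?_, ?_⟩
  · refine tendsto_nhds_unique hT.norm ?_
    simp only [(h _).norm_eq]
    exact tendsto_const_nhds
  · intro x y
    refine tendsto_nhds_unique ((hAx x).inner (tendsto_const_nhds (x := y))) ?_
    simp only [(h _).sym]
    exact (tendsto_const_nhds (x := x)).inner (hAx y)
  · refine tendsto_nhds_unique (tendsto_clm hA hu') ?_
    simp only [(h _).ker]
    exact tendsto_const_nhds
  · refine tendsto_nhds_unique (hb.inner hu') ?_
    simp only [(h _).orth]
    exact tendsto_const_nhds
  · rintro x ⟨hxi, hxu⟩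
    have hp := prH_tendsto hδ hu hxu
    refine le_of_tendsto (tendsto_qv hT hp) ?_
    filter_upwards [hp.eventually (isOpen_interior.mem_nhds hxi)] with i hi
    exact (h i).nonpos _ ⟨hi, prH_mem _ _ _⟩
  · rintro y ⟨hy, hyu⟩
    obtain ⟨p, hp, hpu⟩ := hne
    have ho : p + (2:ℝ) • (y - p) ∉ K := by
      intro ho
      have := inner_int hK hp (d := y - p) zero_le_one one_lt_two ho
      rw [one_smul, add_sub_cancel] at this
      exact hy.2 this
    have hou : p + (2:ℝ) • (y - p) ∈ sphHyp δ u0 :=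
      add_mem_sphHyp hpu (smul_orth _ (sub_orth hyu hpu))
    generalize hoe : p + (2:ℝ) • (y - p) = o at ho hou
    have hpt := prH_tendsto hδ hu hpu
    have hot := prH_tendsto hδ hu hou
    have hex : ∀ i, ∃ t ∈ Icc (0:ℝ) 1, prH δ p (u i) ∈ K → prH δ o (u i) ∉ K →
        prH δ p (u i) + t • (prH δ o (u i) - prH δ p (u i)) ∈ frontier K := by
      intro i
      by_cases h1 : prH δ p (u i) ∈ K ∧ prH δ o (u i) ∉ K
      · obtain ⟨t, ht, hf⟩ := crossing h1.1 h1.2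
        exact ⟨t, ht, fun _ _ => hf⟩
      · exact ⟨0, by simp, fun a b => absurd ⟨a, b⟩ h1⟩
    choose t ht hft using hex
    obtain ⟨t0, ht0, htt⟩ := ultra_lim F isCompact_Icc (Eventually.of_forall ht)
    have hyt : Tendsto (fun i => prH δ p (u i) + t i • (prH δ o (u i) - prH δ p (u i))) F
        (𝓝 (p + t0 • (o - p))) := hpt.add (htt.smul (hot.sub hpt))
    have hev : ∀ᶠ i in (F : Filter ι),
        prH δ p (u i) + t i • (prH δ o (u i) - prH δ p (u i)) ∈ frontier K := by
      filter_upwards [hpt.eventually (isOpen_interior.mem_nhds hp),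
        hot.eventually (hc.isOpen_compl.mem_nhds ho)] with i h1 h2
      exact hft i (interior_subset h1) h2
    have hfr := isClosed_frontier.mem_of_tendsto hyt hev
    have hq0 : qv T0 (p + t0 • (o - p)) = 0 := by
      refine tendsto_nhds_unique ((tendsto_qv hT hyt).congr' ?_) tendsto_const_nhds
      filter_upwards [hev] with i hi
      exact (h i).zero _ ⟨hi, add_mem_sphHyp (prH_mem _ _ _)
        (smul_orth _ (sub_orth (prH_mem _ _ _) (prH_mem _ _ _)))⟩
    have e : p + t0 • (o - p) = p + (t0 * 2) • (y - p) := by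
      rw [← hoe]; module
    rw [e] at hfr hq0
    have := frontier_unique hK hc hp (d := y - p) (s := 1) (t := t0 * 2) zero_le_one
      (by linarith [ht0.1]) (by simpa using hy) hfr
    rw [← this, one_smul, add_sub_cancel] at hq0
    exact hq0

/-- Uniform lower bound for gradients. -/
lemma gr_lower {n : ℕ} (hn : 3 ≤ n) {K : Set (En n)} (hK : Convex ℝ K) (hc : IsClosed K)
    (hKne : K ≠ Set.univ) (hKsc : IsStrictlyConvexSet K) {δ : sphere (0 : En n) 1 → ℝ}
    (hδ : Continuous δ) (hne : ∀ u, (interior K ∩ sphHyp δ u).Nonempty) :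
    ∃ ε : ℝ, 0 < ε ∧ ∀ u T, Adapted K δ u T → ∀ x ∈ frontier K ∩ sphHyp δ u, ε ≤ ‖gr T x‖ := by
  by_contra hcon
  push Not at hcon
  have hk : ∀ k : ℕ, ∃ u T, Adapted K δ u T ∧ ∃ x ∈ frontier K ∩ sphHyp δ u,
      ‖gr T x‖ < 1 / ((k : ℝ) + 1) := fun k => hcon _ (by positivity)
  choose u T hA x hx hlt using hk
  let F : Ultrafilter ℕ := hyperfilter ℕ
  have hF : (F : Filter ℕ) ≤ atTop := by
    rw [← Nat.cofinite_eq_atTop]; exact hyperfilter_le_cofinite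
  have hg0 : Tendsto (fun k => gr (T k) (x k)) F (𝓝 0) := by
    refine squeeze_zero_norm (fun k => (hlt k).le) ?_
    exact (tendsto_one_div_add_atTop_nhds_zero_nat).mono_left hF
  obtain ⟨u0, -, hu⟩ := ultra_lim F (isCompact_univ (X := sphere (0 : En n) 1)) (f := u)
    (Eventually.of_forall fun _ => mem_univ _)
  have : ProperSpace (Trip n) := FiniteDimensional.proper ℝ _
  obtain ⟨T0, -, hT⟩ := ultra_lim F (isCompact_sphere (0 : Trip n) 1) (f := T)
    (Eventually.of_forall fun k => by simpa using (hA k).norm_eq)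
  have hA0 := adapted_limit hK hc hδ F hu hT hA (hne u0)
  obtain ⟨p, hp, hpu⟩ := hne u0
  by_cases hbd : ∃ C : ℝ, ∀ᶠ k in (F : Filter ℕ), ‖x k‖ ≤ C
  · obtain ⟨C, hC⟩ := hbd
    obtain ⟨x0, -, hxt⟩ := ultra_lim F (isCompact_closedBall (0 : En n) C) (f := x)
      (by simpa using hC)
    have hx0 : x0 ∈ frontier K :=
      isClosed_frontier.mem_of_tendsto hxt (Eventually.of_forall fun k => (hx k).1)
    have hx0u := sphHyp_closed hδ hu hxt (Eventually.of_forall fun k => (hx k).2)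
    exact gr_ne_zero hn hK hc hKne hKsc hA0 hp hpu hx0 hx0u
      (tendsto_nhds_unique (tendsto_gr hT hxt) hg0)
  · push Not at hbd
    have hbig : ∀ C : ℝ, ∀ᶠ k in (F : Filter ℕ), C < ‖x k‖ := hbd
    set pk : ℕ → En n := fun k => prH δ p (u k) with hpk
    have hpt : Tendsto pk F (𝓝 p) := prH_tendsto hδ hu hpu
    set τ : ℕ → ℝ := fun k => ‖x k - pk k‖ with hτ
    have hτbig : ∀ C : ℝ, ∀ᶠ k in (F : Filter ℕ), C < τ k := by
      intro C
      have h1 : ∀ᶠ k in (F : Filter ℕ), ‖pk k‖ < ‖p‖ + 1 :=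
        hpt.norm.eventually (gt_mem_nhds (by linarith))
      filter_upwards [h1, hbig (C + (‖p‖ + 1))] with k h2 h3
      have := norm_sub_norm_le (x k) (pk k)
      simp only [hτ]
      linarith
    set e : ℕ → En n := fun k => (τ k)⁻¹ • (x k - pk k) with he
    have hxe : ∀ᶠ k in (F : Filter ℕ), x k = pk k + τ k • e k := by
      filter_upwards [hτbig 0] with k hk
      simp only [he]
      rw [smul_smul, mul_inv_cancel₀ hk.ne', one_smul, add_sub_cancel]
    have heu : ∀ k, ⟪e k, (u k : En n)⟫ = 0 := fun k =>
      smul_orth _ (sub_orth (hx k).2 (prH_mem _ _ _))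
    have hen : ∀ᶠ k in (F : Filter ℕ), e k ∈ sphere (0 : En n) 1 := by
      filter_upwards [hτbig 0] with k hk
      simp only [he, mem_sphere_zero_iff_norm, norm_smul, norm_inv, Real.norm_eq_abs,
        abs_of_pos hk]
      exact inv_mul_cancel₀ hk.ne'
    obtain ⟨e0, he0n, het⟩ := ultra_lim F (isCompact_sphere (0 : En n) 1) hen
    have he0 : e0 ≠ 0 := by
      rintro rfl
      simp at he0n
    have hray : ∀ t : ℝ, 0 ≤ t → p + t • e0 ∈ K := by
      intro t ht
      have hl : Tendsto (fun k => pk k + t • e k) F (𝓝 (p + t • e0)) :=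
        hpt.add (het.const_smul t)
      refine hc.mem_of_tendsto hl ?_
      filter_upwards [hτbig t, hxe, hpt.eventually (isOpen_interior.mem_nhds hp)] with k h1 h2 h3
      exact interior_subset (inner_int hK h3 ht h1 (h2 ▸ hc.frontier_subset (hx k).1))
    obtain ⟨s', hs'⟩ := no_line hK hc hKne hKsc (interior_subset hp) he0
    have hs'neg : s' < 0 := by
      by_contra h0
      exact hs' (hray s' (not_lt.1 h0))
    have hot : Tendsto (fun k => pk k + s' • e k) F (𝓝 (p + s' • e0)) :=
      hpt.add (het.const_smul s')
    have hex : ∀ k, ∃ t ∈ Icc (0:ℝ) 1, pk k ∈ K → pk k + s' • e k ∉ K →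
        pk k + t • (pk k + s' • e k - pk k) ∈ frontier K := by
      intro k
      by_cases h1 : pk k ∈ K ∧ pk k + s' • e k ∉ K
      · obtain ⟨t, ht, hf⟩ := crossing h1.1 h1.2
        exact ⟨t, ht, fun _ _ => hf⟩
      · exact ⟨0, by simp, fun a b => absurd ⟨a, b⟩ h1⟩
    choose t ht hft using hex
    obtain ⟨t0, ht0, htt⟩ := ultra_lim F isCompact_Icc (Eventually.of_forall ht)
    set y : ℕ → En n := fun k => pk k + (t k * s') • e k with hy
    have hyt : Tendsto y F (𝓝 (p + (t0 * s') • e0)) := hpt.add ((htt.mul_const s').smul het)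
    have hyf : ∀ᶠ k in (F : Filter ℕ), y k ∈ frontier K := by
      filter_upwards [hpt.eventually (isOpen_interior.mem_nhds hp),
        hot.eventually (hc.isOpen_compl.mem_nhds hs')] with k h1 h2
      have := hft k (interior_subset h1) h2
      rwa [add_sub_cancel_left, smul_smul] at this
    have hyu : ∀ k, y k ∈ sphHyp δ (u k) := fun k =>
      add_mem_sphHyp (prH_mem _ _ _) (smul_orth _ (heu k))
    have hy0 := isClosed_frontier.mem_of_tendsto hyt hyf
    have hy0u := sphHyp_closed hδ hu hyt (Eventually.of_forall hyu)
    have hchord : ∀ᶠ k in (F : Filter ℕ),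
        ⟪gr (T k) (x k), e k⟫ + ⟪gr (T k) (y k), e k⟫ = 0 := by
      filter_upwards [hyf, hxe, hτbig 0] with k h1 h2 h3
      have q1 := (hA k).zero _ (hx k)
      have q2 := (hA k).zero _ ⟨h1, hyu k⟩
      set L := τ k - t k * s' with hL
      have hLpos : 0 < L := by
        have := mul_nonneg_of_nonpos_of_nonpos (by linarith [(ht k).1] : -(t k) ≤ 0) hs'neg.le
        have h4 : -(t k) * s' = -(t k * s') := by ring
        linarith
      have e1 : x k = y k + L • e k := by
        rw [h2]; simp only [hy, hL]; module
      have e2 : gr (T k) (x k) = gr (T k) (y k) + L • (T k).1 (e k) := by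
        rw [e1]; simp only [gr, map_add, map_smul]; abel
      clear_value e
      have q3 := qv_add (hA k).sym (y k) (L • e k)
      rw [← e1, q1, q2, map_smul, real_inner_smul_right, real_inner_smul_left,
        real_inner_smul_right] at q3
      rw [e2, inner_add_left, real_inner_smul_left]
      have q4 : L * (2 * ⟪gr (T k) (y k), e k⟫ + L * ⟪(T k).1 (e k), e k⟫) = 0 := by linarith
      rcases mul_eq_zero.1 q4 with h5 | h5
      · exact absurd h5 hLpos.ne'
      · linarith
    have hl1 : Tendsto (fun k => ⟪gr (T k) (x k), e k⟫ + ⟪gr (T k) (y k), e k⟫) F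
        (𝓝 (⟪(0 : En n), e0⟫ + ⟪gr T0 (p + (t0 * s') • e0), e0⟫)) :=
      (hg0.inner het).add ((tendsto_gr hT hyt).inner het)
    have hfin : ⟪gr T0 (p + (t0 * s') • e0), e0⟫ = 0 := by
      have := tendsto_nhds_unique (hl1.congr' hchord) tendsto_const_nhds
      simpa using this
    have hst := gr_strict hn hK hc hKne hKsc hA0 hp hpu hy0 hy0u
    rw [sub_add_cancel_left, inner_neg_right, real_inner_smul_right, hfin] at hst
    simp at hst

/-- The rolling ball for a single section. -/
lemma roll {n : ℕ} (hn : 3 ≤ n) {K : Set (En n)} (hK : Convex ℝ K) (hc : IsClosed K)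
    (hKne : K ≠ Set.univ) (hKsc : IsStrictlyConvexSet K) {δ : sphere (0 : En n) 1 → ℝ}
    {u : sphere (0 : En n) 1} {T : Trip n} (h : Adapted K δ u T)
    {p x : En n} (hp : p ∈ interior K) (hpu : p ∈ sphHyp δ u)
    (hx : x ∈ frontier K) (hxu : x ∈ sphHyp δ u) {ρ : ℝ} (hρ : 0 < ρ) (hρg : ρ < ‖gr T x‖) :
    ∃ z ∈ sphHyp δ u, ‖x - z‖ = ρ ∧
        {w : En n | w ∈ sphHyp δ u ∧ ‖w - z‖ ≤ ρ} ⊆ K ∩ sphHyp δ u := by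
  set G := ‖gr T x‖ with hG
  have hGpos : 0 < G := hρ.trans hρg
  set ν := G⁻¹ • gr T x with hν
  have hνn : ‖ν‖ = 1 := by
    rw [hν, norm_smul, norm_inv, norm_norm]
    exact inv_mul_cancel₀ hGpos.ne'
  have hgν : gr T x = G • ν := by
    rw [hν, smul_smul, mul_inv_cancel₀ hGpos.ne', one_smul]
  have hνu : ⟪ν, (u : En n)⟫ = 0 := smul_orth _ (gr_orth h x)
  have hzu : x - ρ • ν ∈ sphHyp δ u := by
    rw [sub_eq_add_neg, ← neg_smul]
    exact add_mem_sphHyp hxu (smul_orth _ hνu)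
  have hA1 : ‖T.1‖ ≤ 1 := by rw [← h.norm_eq]; exact norm_fst_le T
  -- membership in the ball
  have hball : ∀ v : En n, ‖x + v - (x - ρ • ν)‖ ≤ ρ ↔ ‖v‖ ^ 2 ≤ - (2 * ρ * ⟪ν, v⟫) := by
    intro v
    have e : x + v - (x - ρ • ν) = v + ρ • ν := by abel
    have e2 : ‖v + ρ • ν‖ ^ 2 = ‖v‖ ^ 2 + 2 * ρ * ⟪ν, v⟫ + ρ ^ 2 := by
      rw [norm_add_sq_real, real_inner_smul_right, real_inner_comm, norm_smul, hνn, mul_one,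
        Real.norm_eq_abs, sq_abs]
      ring
    rw [e, ← sq_le_sq₀ (norm_nonneg _) hρ.le, e2]
    constructor <;> intro h <;> linarith
  have hneg : ∀ v : En n, v ≠ 0 → ‖x + v - (x - ρ • ν)‖ ≤ ρ → qv T (x + v) < 0 := by
    intro v hv hb
    rw [hball] at hb
    rw [qv_add h.sym, h.zero x ⟨hx, hxu⟩, hgν, real_inner_smul_left]
    have hv2 : 0 < ‖v‖ ^ 2 := by have := norm_pos_iff.2 hv; positivity
    have h1 : ⟪T.1 v, v⟫ ≤ ‖v‖ ^ 2 := by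
      calc ⟪T.1 v, v⟫ ≤ ‖T.1 v‖ * ‖v‖ := real_inner_le_norm _ _
        _ ≤ (1 * ‖v‖) * ‖v‖ := by
            gcongr
            exact (T.1.le_opNorm v).trans (by gcongr)
        _ = ‖v‖ ^ 2 := by ring
    have h2 : 0 < -⟪ν, v⟫ := by
      by_contra h3
      have : ρ * ⟪ν, v⟫ ≥ 0 := mul_nonneg hρ.le (by linarith)
      linarith
    have h3 : 0 < (G - ρ) * (-⟪ν, v⟫) := mul_pos (by linarith) h2
    linarith
  refine ⟨x - ρ • ν, hzu, ?_, ?_⟩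
  · rw [sub_sub_cancel, norm_smul, hνn, mul_one, Real.norm_eq_abs, abs_of_pos hρ]
  · rintro w ⟨hwu, hw⟩
    refine ⟨?_, hwu⟩
    by_contra hwK
    -- an interior point of `K` inside the ball
    have hst := gr_strict hn hK hc hKne hKsc h hp hpu hx hxu
    rw [hgν, real_inner_smul_left] at hst
    have hst' : ⟪ν, p - x⟫ < 0 := by
      by_contra h0
      have := mul_nonneg hGpos.le (not_lt.1 h0)
      linarith
    obtain ⟨t, ht, htb⟩ : ∃ t ∈ Ioc (0:ℝ) 1, t * ‖p - x‖ ^ 2 ≤ -(2 * ρ * ⟪ν, p - x⟫) := by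
      set a := -(2 * ρ * ⟪ν, p - x⟫) with ha
      have hapos : 0 < a := by
        have := mul_pos hρ (neg_pos.2 hst')
        rw [ha]; linarith
      have hN := sq_nonneg ‖p - x‖
      set N := ‖p - x‖ ^ 2
      refine ⟨a / (a + N), ⟨by positivity, ?_⟩, ?_⟩
      · rw [div_le_one (by positivity)]; linarith
      · rw [div_mul_eq_mul_div, div_le_iff₀ (by positivity)]
        nlinarith
    have hmI := hK.add_smul_sub_mem_interior (hc.frontier_subset hx) hp ht
    obtain ⟨v1, hv1⟩ : ∃ v1, v1 = t • (p - x) := ⟨_, rfl⟩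
    rw [← hv1] at hmI
    have hv1b : ‖x + v1 - (x - ρ • ν)‖ ≤ ρ := by
      rw [hball, hv1, norm_smul, real_inner_smul_right, mul_pow, Real.norm_eq_abs, sq_abs]
      nlinarith [ht.1]
    have hv1ne : ⟪ν, v1⟫ < 0 := by
      rw [hv1, real_inner_smul_right]
      exact mul_neg_of_pos_of_neg ht.1 hst'
    obtain ⟨s, hs, hf⟩ := crossing (interior_subset hmI) hwK
    have hv2u : x + v1 + s • (w - (x + v1)) ∈ sphHyp δ u := by
      have h1 : x + v1 ∈ sphHyp δ u := hv1 ▸ add_mem_sphHyp hxu (smul_orth _ (sub_orth hpu hxu))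
      exact add_mem_sphHyp h1 (smul_orth _ (sub_orth hwu h1))
    have hq := h.zero _ ⟨hf, hv2u⟩
    have hwx : w ≠ x := by
      rintro rfl
      exact hwK (hc.frontier_subset hx)
    set v2 := (1 - s) • v1 + s • (w - x) with hv2
    have e : x + v1 + s • (w - (x + v1)) = x + v2 := by rw [hv2]; module
    rw [e] at hq
    have hwb : ‖x + (w - x) - (x - ρ • ν)‖ ≤ ρ := by rwa [add_sub_cancel]
    have hwne : ⟪ν, w - x⟫ < 0 := by
      have h1 := (hball _).1 hwb
      have h2 : 0 < ‖w - x‖ ^ 2 := by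
        have := norm_pos_iff.2 (sub_ne_zero.2 hwx); positivity
      by_contra h0
      have := mul_nonneg hρ.le (not_lt.1 h0)
      linarith
    have hv2ne : ⟪ν, v2⟫ < 0 := by
      rw [hv2, inner_add_right, real_inner_smul_right ν v1, real_inner_smul_right]
      rcases hs.1.lt_or_eq with h1 | h1
      · have h2 := mul_neg_of_pos_of_neg h1 hwne
        have h3 := mul_nonpos_of_nonneg_of_nonpos (by linarith [hs.2] : 0 ≤ 1 - s) hv1ne.le
        linarith
      · rw [← h1]; simpa using hv1ne
    have hv20 : v2 ≠ 0 := by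
      intro h0
      rw [h0, inner_zero_right] at hv2ne
      exact lt_irrefl _ hv2ne
    have hv2b : ‖x + v2 - (x - ρ • ν)‖ ≤ ρ := by
      have hcv := convex_closedBall (x - ρ • ν) ρ
      have m1 : x + v1 ∈ closedBall (x - ρ • ν) ρ := by rwa [mem_closedBall_iff_norm]
      have m2 : w ∈ closedBall (x - ρ • ν) ρ := by rwa [mem_closedBall_iff_norm]
      have := hcv.add_smul_sub_mem m1 m2 hs
      rwa [e, mem_closedBall_iff_norm] at this
    exact absurd hq (hneg v2 hv20 hv2b).ne

end

lemma section_top {m : ℕ} (hm : 2 ≤ m) {Q U C V : Set (En m)} (hQ : IsClosed Q)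
    (hQne : Q.Nonempty) (hU : U ∈ componentsIn Qᶜ) (hUc : Convex ℝ U) (hC : Convex ℝ C)
    (hVc : Convex ℝ V) (hVC : V ⊆ C) (hfr : frontier U = C \ V)
    (hns : ∀ x ∈ frontier U, ∀ y ∈ frontier U, x ≠ y → ¬ segment ℝ x y ⊆ frontier U) :
    V.Nonempty ∧ V ⊆ U ∧ U ⊆ Qᶜ ∧ frontier U ⊆ Q := by
  obtain ⟨x0, hx0, rfl⟩ := hU
  set U := connectedComponentIn Qᶜ x0 with hUdef
  have hUo : IsOpen U := hQ.isOpen_compl.connectedComponentIn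
  have hUQ : U ⊆ Qᶜ := connectedComponentIn_subset _ _
  have hx0U : x0 ∈ U := mem_connectedComponentIn hx0
  have hUp : IsPreconnected U := isPreconnected_connectedComponentIn
  have hfQ : frontier U ⊆ Q := by
    intro x hx
    by_contra hxQ
    have h1 : IsPreconnected (closure U ∩ Qᶜ) :=
      hUp.subset_closure (fun y hy => ⟨subset_closure hy, hUQ hy⟩) inter_subset_left
    have h2 := h1.subset_connectedComponentIn (x := x0) ⟨subset_closure hx0U, hx0⟩
      inter_subset_right
    have h3 : x ∈ U := h2 ⟨hx.1, hxQ⟩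
    exact hx.2 (hUo.interior_eq.symm ▸ h3)
  have hUfr : ∀ x ∈ U, x ∉ frontier U := fun x hx hf => hUQ hx (hfQ hf)
  have hVU : (V ∩ U).Nonempty := by
    by_contra hemp
    have hVU : ∀ x ∈ V, x ∉ U := fun x hx hx' => hemp ⟨x, hx, hx'⟩
    have hUC : ∀ x ∈ U, x ∉ C := by
      intro x hx hxC
      by_cases hxV : x ∈ V
      · exact hVU x hxV hx
      · exact hUfr x hx (hfr ▸ ⟨hxC, hxV⟩)
    have hfeq : frontier U = closure U ∩ C := by
      apply Subset.antisymm
      · intro x hx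
        exact ⟨hx.1, (hfr ▸ hx : x ∈ C \ V).1⟩
      · rintro x ⟨h1, h2⟩
        refine ⟨h1, ?_⟩
        rw [hUo.interior_eq]
        exact fun h => hUC x h h2
    have hfc : Convex ℝ (frontier U) := hfeq ▸ hUc.closure.inter hC
    have hsub : (frontier U).Subsingleton := by
      intro x hx y hy
      by_contra hxy
      exact hns x hx y hy hxy (hfc.segment_subset hx hy)
    obtain ⟨q, hq⟩ := hQne
    have hqU : q ∉ U := fun h => hUQ h hq
    obtain ⟨a, ha⟩ : ∃ a, frontier U ⊆ {a} := by
      rcases hsub.eq_empty_or_singleton with h | ⟨a, h⟩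
      · exact ⟨0, by simp [h]⟩
      · exact ⟨a, h.subset⟩
    have hrank : 1 < Module.rank ℝ (En m) := by
      rw [← Module.finrank_eq_rank, finrank_euclideanSpace_fin]
      exact_mod_cast hm
    have hconn := (isConnected_compl_singleton_of_one_lt_rank hrank a).isPreconnected
    have : Nontrivial (En m) := by
      have : Nonempty (Fin m) := ⟨⟨0, by omega⟩⟩
      infer_instance
    have hUa : ∃ b ∈ U, b ≠ a := by
      by_contra hall
      push Not at hall
      have hd : Dense ({a}ᶜ : Set (En m)) := dense_compl_singleton a
      obtain ⟨b, hb, hb'⟩ := hd.inter_open_nonempty U hUo ⟨x0, hx0U⟩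
      exact hb' (hall b hb)
    obtain ⟨b, hbU, hba⟩ := hUa
    have hall : ({a}ᶜ : Set (En m)) ⊆ U := by
      intro y hy
      by_contra hyU
      obtain ⟨z, hz, hzf⟩ := preconn_frontier hconn (t := U) ⟨b, hba, hbU⟩ ⟨y, hy, hyU⟩
      exact hz (ha hzf)
    have hqa : q = a := by
      by_contra h
      exact hqU (hall h)
    obtain ⟨v, hv⟩ := exists_ne (0 : En m)
    have h1 : a + v ∈ U := hall (by simpa using hv)
    have h2 : a - v ∈ U := hall (by simpa using hv)
    apply hqU
    have := hUc h1 h2 (a := 1/2) (b := 1/2) (by norm_num) (by norm_num) (by norm_num)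
    rw [hqa]
    convert this using 1
    module
  refine ⟨hVU.mono inter_subset_left, ?_, hUQ, hfQ⟩
  intro x hx
  by_contra hxU
  obtain ⟨z, hz, hzf⟩ := preconn_frontier hVc.isPreconnected (t := U) hVU ⟨x, hx, hxU⟩
  exact (hfr ▸ hzf : z ∈ C \ V).2 hz

lemma quad_rep {m : ℕ} (a : Matrix (Fin m) (Fin m) ℝ) (b : Fin m → ℝ) (c : ℝ) (ha : a.IsSymm) :
    ∃ T : Trip m, (∀ x y, ⟪T.1 x, y⟫ = ⟪x, T.1 y⟫) ∧
      ∀ x : En m, qv T x = (∑ i, ∑ k, a i k * x i * x k) + 2 * (∑ i, b i * x i) + c := by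
  refine ⟨(Matrix.toEuclideanCLM (𝕜 := ℝ) a, WithLp.toLp 2 b, c), ?_, ?_⟩
  · intro x y
    simp only
    rw [real_inner_comm, Matrix.inner_toEuclideanCLM, Matrix.inner_toEuclideanCLM,
      Matrix.dotProduct_mulVec, ← Matrix.mulVec_transpose, ha.eq, dotProduct_comm]
  · intro x
    simp only [qv]
    congr 2
    · rw [real_inner_comm, Matrix.inner_toEuclideanCLM]
      simp only [dotProduct, Matrix.mulVec, Finset.mul_sum]
      refine Finset.sum_congr rfl fun i _ => Finset.sum_congr rfl fun k _ => ?_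
      ring
    · simp [PiLp.inner_apply, mul_comm]

lemma quad_push {m n : ℕ} (φ : En m →ᵃⁱ[ℝ] En n) (u : En n)
    (hu : ∀ x, ⟪φ.linearIsometry x, u⟫ = 0)
    (S : Trip m) (hS : ∀ x y, ⟪S.1 x, y⟫ = ⟪x, S.1 y⟫) :
    ∃ T : Trip n, (∀ x y, ⟪T.1 x, y⟫ = ⟪x, T.1 y⟫) ∧ T.1 u = 0 ∧ ⟪T.2.1, u⟫ = 0 ∧
      ∀ x : En m, qv T (φ x) = qv S x := by
  set L : En m →L[ℝ] En n := φ.linearIsometry.toContinuousLinearMap with hL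
  set M := ContinuousLinearMap.adjoint L with hM
  have hLx : ∀ x, L x = φ.linearIsometry x := fun x => rfl
  have hML : ∀ x, M (L x) = x := by
    intro x
    refine ext_inner_right ℝ fun y => ?_
    rw [hM, ContinuousLinearMap.adjoint_inner_left, hLx, hLx, LinearIsometry.inner_map_map]
  have hMu : M u = 0 := by
    refine ext_inner_right ℝ fun y => ?_
    rw [hM, ContinuousLinearMap.adjoint_inner_left, hLx, real_inner_comm, hu, inner_zero_left]
  have hadj : ∀ x y, ⟪L x, y⟫ = ⟪x, M y⟫ := fun x y => by
    rw [hM, ContinuousLinearMap.adjoint_inner_right]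
  have hadj' : ∀ x y, ⟪x, L y⟫ = ⟪M x, y⟫ := fun x y => by
    rw [hM, ContinuousLinearMap.adjoint_inner_left]
  set o := φ 0 with ho
  have hφ : ∀ x, φ x = o + L x := by
    intro x
    have := φ.map_vadd 0 x
    simp only [vadd_eq_add, add_zero] at this
    rw [this, add_comm, hLx]
  refine ⟨(L.comp (S.1.comp M), L S.2.1 - L (S.1 (M o)),
    ⟪S.1 (M o), M o⟫ - 2 * ⟪S.2.1, M o⟫ + S.2.2), ?_, ?_, ?_, ?_⟩
  · intro x y
    simp only [ContinuousLinearMap.comp_apply]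
    rw [hadj, hadj', hS]
  · simp [hMu]
  · simp only
    rw [inner_sub_left, hadj, hadj, hMu, inner_zero_right, inner_zero_right, sub_zero]
  · intro x
    have h1 : ⟪S.1 (M o), x⟫ = ⟪S.1 x, M o⟫ := by rw [hS, real_inner_comm]
    simp only [qv, ContinuousLinearMap.comp_apply, hφ, map_add, hML, inner_add_left,
      inner_add_right, inner_sub_left, hadj]
    linarith

/-- A section produces an adapted quadratic function. -/
lemma exists_adapted {n : ℕ} (hn : 3 ≤ n) {K : Set (En n)} (hK : Convex ℝ K) (hc : IsClosed K)
    (hKsc : IsStrictlyConvexSet K) {δ : sphere (0 : En n) 1 → ℝ} {u : sphere (0 : En n) 1}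
    (hsec : IsConvexQuadricIn (sphHyp δ u) (frontier K ∩ sphHyp δ u)) :
    (interior K ∩ sphHyp δ u).Nonempty ∧ ∃ T, Adapted K δ u T := by
  obtain ⟨-, φ, hrange, Q, U, ⟨⟨a, b, c, ha, -, hQ⟩, hQne⟩, hU, hUc, hSU⟩ := hsec
  have hφH : ∀ x, φ x ∈ sphHyp δ u := fun x => hrange ▸ mem_range_self x
  obtain ⟨S, hS, hSq⟩ := quad_rep a b c ha
  have hQ' : Q = {x | qv S x = 0} := by
    rw [hQ]; ext x; simp only [mem_ofPred_eq, hSq]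
  have hScont : Continuous (qv S) := by unfold qv; fun_prop
  have hQcl : IsClosed Q := hQ' ▸ isClosed_eq hScont continuous_const
  have hfr : frontier U = (φ ⁻¹' K) \ (φ ⁻¹' interior K) := by
    rw [← hSU]
    ext x
    simp only [mem_preimage, mem_inter_iff, mem_sdiff, hφH, and_true, hc.frontier_eq]
  have hpre : ∀ x, x ∈ frontier U ↔ φ x ∈ frontier K := by
    intro x
    rw [← hSU]
    simp [hφH]
  have hns : ∀ x ∈ frontier U, ∀ y ∈ frontier U, x ≠ y → ¬ segment ℝ x y ⊆ frontier U := by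
    intro x hx y hy hxy hseg
    refine hKsc (φ x) ((hpre x).1 hx) (φ y) ((hpre y).1 hy) (φ.injective.ne hxy) ?_
    have := image_segment ℝ φ.toAffineMap x y
    rw [AffineIsometry.coe_toAffineMap] at this
    rw [← this]
    rintro _ ⟨z, hz, rfl⟩
    exact (hpre z).1 (hseg hz)
  have hCc : Convex ℝ (φ ⁻¹' K) := hK.affine_preimage φ.toAffineMap
  have hVc : Convex ℝ (φ ⁻¹' interior K) := hK.interior.affine_preimage φ.toAffineMap
  obtain ⟨⟨v, hv⟩, hVU, hUQ, hfQ⟩ := section_top (by omega) hQcl hQne hU hUc hCc hVc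
    (preimage_mono interior_subset) hfr hns
  refine ⟨⟨φ v, hv, hφH v⟩, ?_⟩
  have hu : ∀ x, ⟪φ.linearIsometry x, (u : En n)⟫ = 0 := by
    intro x
    have := φ.map_vadd 0 x
    simp only [vadd_eq_add, add_zero] at this
    have e : φ.linearIsometry x = φ x - φ 0 := by rw [this]; abel
    rw [e]
    exact sub_orth (hφH x) (hφH 0)
  obtain ⟨T, hT, hTu, hTb, hTq⟩ := quad_push φ u hu S hS
  have hz : ∀ x ∈ frontier K ∩ sphHyp δ u, qv T x = 0 := by
    rintro x ⟨hx, hxu⟩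
    rw [← hrange] at hxu
    obtain ⟨x, rfl⟩ := hxu
    rw [hTq]
    have := hfQ ((hpre x).2 hx)
    rw [hQ'] at this
    exact this
  have hUne : ∀ x ∈ U, qv S x ≠ 0 := by
    intro x hx h0
    exact hUQ hx (hQ' ▸ h0)
  have hscale : ∀ (r : ℝ) (x : En n), qv (r • T) x = r * qv T x := by
    intro r x
    simp only [qv, Prod.smul_fst, Prod.smul_snd, ContinuousLinearMap.smul_apply,
      real_inner_smul_left, smul_eq_mul]
    ring
  have hTne : T ≠ 0 := by
    intro h0
    have h1 := hTq v
    rw [h0] at h1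
    apply hUne v (hVU hv)
    rw [← h1]
    simp [qv]
  -- sign
  obtain ⟨σ, hσ, hneg⟩ : ∃ σ : ℝ, |σ| = 1 ∧ ∀ x ∈ U, σ * qv S x ≤ 0 := by
    have himg : IsPreconnected (qv S '' U) := hUc.isPreconnected.image _ hScont.continuousOn
    have h0 : (0:ℝ) ∉ qv S '' U := by
      rintro ⟨x, hx, h⟩
      exact hUne x hx h
    by_cases hex : ∃ x ∈ U, qv S x ≤ 0
    · obtain ⟨x, hx, hx0⟩ := hex
      refine ⟨1, by simp, fun y hy => ?_⟩
      by_contra hpos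
      rw [one_mul, not_le] at hpos
      exact h0 (himg.Icc_subset (mem_image_of_mem _ hx) (mem_image_of_mem _ hy) ⟨hx0, hpos.le⟩)
    · push Not at hex
      exact ⟨-1, by simp, fun y hy => by linarith [hex y hy]⟩
  have hTpos : 0 < ‖T‖ := norm_pos_iff.2 hTne
  refine ⟨(σ * ‖T‖⁻¹) • T, ?_, ?_, ?_, ?_, ?_, ?_⟩
  · rw [norm_smul, norm_mul, Real.norm_eq_abs, hσ, one_mul, norm_inv, norm_norm]
    exact inv_mul_cancel₀ hTpos.ne'
  · intro x y
    simp only [Prod.smul_fst, ContinuousLinearMap.smul_apply, real_inner_smul_left,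
      real_inner_smul_right, hT]
  · simp only [Prod.smul_fst, ContinuousLinearMap.smul_apply, hTu, smul_zero]
  · simp only [Prod.smul_snd, Prod.smul_fst]
    exact smul_orth _ hTb
  · rintro x ⟨hx, hxu⟩
    rw [← hrange] at hxu
    obtain ⟨x, rfl⟩ := hxu
    rw [hscale, hTq]
    have := mul_nonpos_of_nonneg_of_nonpos (inv_nonneg.2 hTpos.le) (hneg x (hVU hx))
    linarith
  · intro x hx
    rw [hscale, hz x hx, mul_zero]

/-- Lemma 7: under the hypotheses of Theorem 2 with K strictly convex and
regular, there is a uniform radius ρ > 0 of interior balls rolling inside all the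
hyperplane sections: for every u and every x ∈ frontier K ∩ H(u) there is z ∈ H(u) with
‖x − z‖ = ρ and the ball of radius ρ around z inside H(u) contained in K ∩ H(u). -/
theorem uniform_rolling_ball_in_sections
    {n : ℕ} (hn : 3 ≤ n) (K : Set (En n)) (hKconv : Convex ℝ K) (hKcl : IsClosed K)
    (hKint : (interior K).Nonempty) (hKne : K ≠ Set.univ)
    (hKsc : IsStrictlyConvexSet K) (hKreg : IsRegularSet K)
    (δ : sphere (0 : En n) 1 → ℝ) (hδ : Continuous δ)
    (hsec : ∀ u : sphere (0 : En n) 1,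
      IsConvexQuadricIn (sphHyp δ u) (frontier K ∩ sphHyp δ u)) :
    ∃ ρ : ℝ, 0 < ρ ∧ ∀ u : sphere (0 : En n) 1, ∀ x ∈ frontier K ∩ sphHyp δ u,
      ∃ z ∈ sphHyp δ u, ‖x - z‖ = ρ ∧
        {w : En n | w ∈ sphHyp δ u ∧ ‖w - z‖ ≤ ρ} ⊆ K ∩ sphHyp δ u := by
  have hAd := fun u => exists_adapted hn hKconv hKcl hKsc (hsec u)
  obtain ⟨ε, hε, hlow⟩ := gr_lower hn hKconv hKcl hKne hKsc hδ (fun u => (hAd u).1)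
  refine ⟨ε / 2, half_pos hε, ?_⟩
  rintro u x ⟨hx, hxu⟩
  obtain ⟨⟨p, hp, hpu⟩, T, hT⟩ := hAd u
  have := hlow u T hT x ⟨hx, hxu⟩
  exact roll hn hKconv hKcl hKne hKsc hT hp hpu hx hxu (half_pos hε) (by linarith)
end
end
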